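/- arXiv:2512.12804 — 3 statements merged into one kernel-verified Lean document; each statement's English description precedes it below -/
import Mathlib

section
/- In the causal model M with binary endogenous variables X and Y, graph X → Y, P(Y=1 | X=1) = p and P(Y=1 | X=0) = q with 0 < p < q < 1, and P(X=1) > 0: the PO-semantics point-identifies the probability of necessity, namely P^N((Y=0)_{X←0} | X=1, Y=1) = 1 − q. -/
/-!
Summing the variables out in decreasing topological order, a truncated factorization has total
mass one. Hence, once `X ← xv` fixes the parents of `Y`, the counterfactual `Y = y` has, in a world
of the PO-SCM with positive mass, probability one or zero according to whether the potential outcome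
variable `Y_{xv}` has the value `y`.

If the conditioning event contradicts `Pa_Y = xv`, the equation of `Y` does not read `Y_{xv}`
anywhere on that event. The potential outcome is then independent of the event, and what remains is
its marginal `P(Y = y | Pa_Y = xv)`. In the example, conditioning on `X = 1` leaves `Y₀` free, so
the probability of necessity is `P(Y₀ = 0) = 1 - q`.
-/

open Finset

noncomputable section

attribute [local instance] Classical.propDecidable

/-- An assignment of values to the variables. -/
abbrev Asg {ν : Type} (Val : ν → Type) : Type := (i : ν) → Val i

/-- A probabilistic causal model (a causal Bayesian network with explicit exogenous
variables): a signature (variables `ν` with value sets `Val`), a graph given by the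
parent map `pa` (with `ord` a witness of acyclicity, and the variables in `exo` being
the roots), and a joint probability distribution that is Markov relative to the graph,
presented by the conditional probability table `cpt i w x = P(i = x | pa i = w|_{pa i})`
of each variable given its parents (for exogenous variables this is the marginal). -/
structure CM (ν : Type) (Val : ν → Type) : Type where
  exo : Finset ν
  pa : ν → Finset ν
  ord : ν → ℕ
  cpt : (i : ν) → Asg Val → Val i → ℝ

/-- A basic counterfactual event `(Y = yv)_{X ← xv}`. -/
structure CFEvent (ν : Type) (Val : ν → Type) : Type where
  X : Finset ν
  xv : Asg Val
  Y : Finset ν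
  yv : Asg Val

namespace CM

variable {ν : Type} {Val : ν → Type}

/-- Well-formedness of a causal model: exogenous variables are roots, the graph is
acyclic, the conditional probability table of each variable depends only on its
parents, and each table is a probability distribution. -/
structure WF [Fintype ν] [∀ i, Fintype (Val i)] (M : CM ν Val) : Prop where
  pa_exo : ∀ i ∈ M.exo, M.pa i = ∅
  acyclic : ∀ i j, j ∈ M.pa i → M.ord j < M.ord i
  cpt_pa : ∀ (i : ν) (w w' : Asg Val) (x : Val i),
    (∀ j ∈ M.pa i, w j = w' j) → M.cpt i w x = M.cpt i w' x
  cpt_nonneg : ∀ i w x, 0 ≤ M.cpt i w x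
  cpt_sum : ∀ i w, ∑ x, M.cpt i w x = 1

variable [Fintype ν] [∀ i, Fintype (Val i)] [∀ i, Nonempty (Val i)]

variable (M : CM ν Val)

/-- The joint distribution `P(U = u, V = v)` (Markov factorization). -/
def joint (w : Asg Val) : ℝ := ∏ i, M.cpt i w (w i)

/-- The interventional distribution `P_{do(X = xv)}` (truncated factorization). -/
def pdo (X : Finset ν) (xv w : Asg Val) : ℝ :=
  if ∀ i ∈ X, w i = xv i then ∏ i ∈ Xᶜ, M.cpt i w (w i) else 0

/-- `P_{do(X = xv)}(Y = yv | U = u)`, where `u` is the exogenous part of `w`: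
the probability of the basic counterfactual `(Y = yv)_{X ← xv}` given the world `w`. -/
def cfBasic (X : Finset ν) (xv : Asg Val) (Y : Finset ν) (yv : Asg Val) (w : Asg Val) : ℝ :=
  (∑ w' : Asg Val,
      if (∀ i ∈ M.exo, w' i = w i) ∧ ∀ i ∈ Y, w' i = yv i then M.pdo X xv w' else 0) /
  (∑ w' : Asg Val, if ∀ i ∈ M.exo, w' i = w i then M.pdo X xv w' else 0)

/-- The probability of a complex counterfactual
`P(y_x, …, z_w) = Σ_{(u,v)} P(y_x | u,v) ⋯ P(z_w | u,v) P(u,v)`. -/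
def cfProb (evs : List (CFEvent ν Val)) : ℝ :=
  ∑ w : Asg Val, (evs.map fun e => M.cfBasic e.X e.xv e.Y e.yv w).prod * M.joint w

/-- Conditional probability of a complex counterfactual given an actual event `Z = zv`:
`P(y_x, …, z_w | Z = zv) = P(y_x, …, z_w, Z = zv) / P(Z = zv)`. -/
def cfProbCond (evs : List (CFEvent ν Val)) (Z : Finset ν) (zv : Asg Val) : ℝ :=
  (∑ w : Asg Val,
      (if ∀ i ∈ Z, w i = zv i then (evs.map fun e => M.cfBasic e.X e.xv e.Y e.yv w).prod
       else 0) * M.joint w) /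
  (∑ w : Asg Val, if ∀ i ∈ Z, w i = zv i then M.joint w else 0)

/-- `M` is a structural causal model: every endogenous variable is a deterministic
function of its parents (the exogenous variables are automatically mutually
independent in this presentation). -/
def IsSCM : Prop :=
  ∀ i ∉ M.exo, ∀ (w : Asg Val) (x : Val i), M.cpt i w x = 0 ∨ M.cpt i w x = 1

/-- The actualized refinement `M^{(u,v)}` of `M` at the actual world `a`:
for each endogenous variable, the conditional distribution given the *actual* values of
its parents is replaced by the point mass at the actual value of the variable. -/
def refine (a : Asg Val) : CM ν Val where
  exo := M.exo
  pa := M.pa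
  ord := M.ord
  cpt := fun i w x =>
    if i ∉ M.exo ∧ ∀ j ∈ M.pa i, w j = a j then (if x = a i then 1 else 0)
    else M.cpt i w x

/-- The B-semantics probability of a basic counterfactual,
`P^B((Y = yv)_{X ← xv} | a) = (P^{a})_{do(X = xv)}(Y = yv | U = u)` where `u` is the
exogenous part of the actual world `a`. -/
def pbBasic (a : Asg Val) (X : Finset ν) (xv : Asg Val) (Y : Finset ν) (yv : Asg Val) : ℝ :=
  (M.refine a).cfBasic X xv Y yv a

/-- The B-semantics probability of a complex counterfactual. -/
def pbProb (evs : List (CFEvent ν Val)) : ℝ :=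
  ∑ w : Asg Val, (evs.map fun e => M.pbBasic w e.X e.xv e.Y e.yv).prod * M.joint w

/-- The conditional B-semantics probability of a complex counterfactual given `Z = zv`. -/
def pbProbCond (evs : List (CFEvent ν Val)) (Z : Finset ν) (zv : Asg Val) : ℝ :=
  (∑ w : Asg Val,
      (if ∀ i ∈ Z, w i = zv i then (evs.map fun e => M.pbBasic w e.X e.xv e.Y e.yv).prod
       else 0) * M.joint w) /
  (∑ w : Asg Val, if ∀ i ∈ Z, w i = zv i then M.joint w else 0)

/-- An assignment of values to the parents of `i`. -/
def PaAsg (i : ν) : Type := (j : {j : ν // j ∈ M.pa i}) → Val j.1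

instance (i : ν) : Fintype (M.PaAsg i) := by unfold PaAsg; infer_instance
instance (i : ν) : Nonempty (M.PaAsg i) := ⟨fun j => Classical.arbitrary (Val j.1)⟩

/-- Extend an assignment of the parents of `i` to a full assignment (arbitrarily). -/
def extendPa (i : ν) (κ : M.PaAsg i) : Asg Val :=
  fun j => if h : j ∈ M.pa i then κ ⟨j, h⟩ else Classical.arbitrary (Val j)

/-- The index type of the potential outcome variables `X_{pa_X}` of the PO-SCM:
one for each endogenous variable `X` and each value `pa_X` of its parents. -/
def POI : Type := Σ i : {i : ν // i ∉ M.exo}, M.PaAsg i.1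

instance : Fintype (POI M) := by unfold POI; infer_instance

/-- The value set of the potential outcome variable `X_{pa_X}` is that of `X`. -/
def POB : POI M → Type := fun p => Val p.1.1

instance (p : POI M) : Fintype (POB M p) := by unfold POB; infer_instance
instance (p : POI M) : Nonempty (POB M p) := by unfold POB; infer_instance

/-- The type of values of the response variable `U_X` of the canonical frame:
functions from values of the parents of `X` to values of `X`. -/
def RType (i : ν) : Type := M.PaAsg i → Val i

instance (i : ν) : Fintype (M.RType i) := by unfold RType; infer_instance
instance (i : ν) : Nonempty (M.RType i) := ⟨fun _ => Classical.arbitrary (Val i)⟩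

/-- The index type of the response variables of the canonical frame:
one for each endogenous variable. -/
def RVI : Type := {i : ν // i ∉ M.exo}

instance : Fintype (RVI M) := by unfold RVI; infer_instance

/-- The value set of the response variable `U_X`. -/
def RB : RVI M → Type := fun p => M.RType p.1

instance (p : RVI M) : Fintype (RB M p) := by unfold RB; infer_instance
instance (p : RVI M) : Nonempty (RB M p) := by unfold RB; infer_instance

end CM

/-- The family of value sets of an extended signature `ν ⊕ β`. -/
def SumVal {ν β : Type} (Val : ν → Type) (B : β → Type) : ν ⊕ β → Type := fun i =>
  match i with
  | .inl j => Val j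
  | .inr b => B b

section SumValInst

variable {ν β : Type} {Val : ν → Type} {B : β → Type}

instance [∀ i, Fintype (Val i)] [∀ b, Fintype (B b)] (i : ν ⊕ β) :
    Fintype (SumVal Val B i) := by
  cases i with
  | inl j => exact inferInstanceAs (Fintype (Val j))
  | inr b => exact inferInstanceAs (Fintype (B b))

instance [∀ i, Nonempty (Val i)] [∀ b, Nonempty (B b)] (i : ν ⊕ β) :
    Nonempty (SumVal Val B i) := by
  cases i with
  | inl j => exact inferInstanceAs (Nonempty (Val j))
  | inr b => exact inferInstanceAs (Nonempty (B b))

/-- Lift an assignment on `ν` to one on `ν ⊕ β` (arbitrary on the new variables). -/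
def liftAsg [∀ b, Nonempty (B b)] (xv : Asg Val) : Asg (SumVal Val B) := fun i =>
  match i with
  | .inl j => xv j
  | .inr b => Classical.arbitrary (B b)

/-- Lift a counterfactual event on the original variables to the extended signature. -/
def liftCFEvent [∀ b, Nonempty (B b)] (e : CFEvent ν Val) : CFEvent (ν ⊕ β) (SumVal Val B) :=
  ⟨e.X.image Sum.inl, liftAsg e.xv, e.Y.image Sum.inl, liftAsg e.yv⟩

variable [Fintype ν] [Fintype β] [∀ i, Fintype (Val i)] [∀ b, Fintype (B b)]
  [∀ i, Nonempty (Val i)] [∀ b, Nonempty (B b)]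

/-- The probability, computed in a model `N` over an extended signature, of a complex
counterfactual over the original variables. -/
def extProb (N : CM (ν ⊕ β) (SumVal Val B)) (evs : List (CFEvent ν Val)) : ℝ :=
  N.cfProb (evs.map liftCFEvent)

/-- The probability, computed in a model `N` over an extended signature, of a complex
counterfactual over the original variables, conditional on an actual event `Z = zv`
over the original variables. -/
def extProbCond (N : CM (ν ⊕ β) (SumVal Val B)) (evs : List (CFEvent ν Val))
    (Z : Finset ν) (zv : Asg Val) : ℝ :=
  N.cfProbCond (evs.map liftCFEvent) (Z.image Sum.inl) (liftAsg zv)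

/-- The probability, computed in a model `N` over an extended signature, of a basic
counterfactual conditional on the values `a` of *all* the original variables
(marginalizing over the added exogenous variables), via the law of total probability. -/
def extBasicCond (N : CM (ν ⊕ β) (SumVal Val B)) (a : Asg Val)
    (X : Finset ν) (xv : Asg Val) (Y : Finset ν) (yv : Asg Val) : ℝ :=
  (∑ w : Asg (SumVal Val B),
      if ∀ i : ν, w (Sum.inl i) = a i then
        N.cfBasic (X.image Sum.inl) (liftAsg xv) (Y.image Sum.inl) (liftAsg yv) w * N.joint w
      else 0) /
  (∑ w : Asg (SumVal Val B), if ∀ i : ν, w (Sum.inl i) = a i then N.joint w else 0)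

end SumValInst

namespace CM

variable {ν : Type} {Val : ν → Type} [Fintype ν] [∀ i, Fintype (Val i)] [∀ i, Nonempty (Val i)]
variable (M : CM ν Val)

/-- The PO-SCM `M^N` of `M`: the structural causal model obtained from `M` by adding,
for each endogenous variable `X` and each value `pa_X` of its parents, an exogenous
potential outcome variable `X_{pa_X}` (with marginal `P_M(X | Pa_X = pa_X)`, all
exogenous variables mutually independent), and the structural equation
`X = X_{pa_X}` whenever `Pa_X = pa_X`. -/
def MN : CM (ν ⊕ POI M) (SumVal Val (POB M)) where
  exo := (M.exo.image Sum.inl) ∪ (univ.image Sum.inr)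
  pa := fun i =>
    match i with
    | .inl j => ((M.pa j).image Sum.inl) ∪
        ((univ.filter fun p : POI M => p.1.1 = j).image Sum.inr)
    | .inr _ => ∅
  ord := fun i =>
    match i with
    | .inl j => M.ord j + 1
    | .inr _ => 0
  cpt := fun i =>
    match i with
    | .inl j => fun w x =>
        if h : j ∈ M.exo then M.cpt j (fun k => w (Sum.inl k)) x
        else if x = w (Sum.inr ⟨⟨j, h⟩, fun k => w (Sum.inl k.1)⟩) then 1 else 0
    | .inr p => fun _ x => M.cpt p.1.1 (M.extendPa p.1.1 p.2) x

/-- `P^N(y_x, …, z_w)`: the probability of a complex counterfactual computed in the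
PO-SCM `M^N`. -/
def pnProb (evs : List (CFEvent ν Val)) : ℝ := extProb M.MN evs

/-- `P^N(y_x, …, z_w | Z = zv)`: the conditional probability of a complex
counterfactual computed in the PO-SCM `M^N`, given an actual event on the
endogenous variables. -/
def pnProbCond (evs : List (CFEvent ν Val)) (Z : Finset ν) (zv : Asg Val) : ℝ :=
  extProbCond M.MN evs Z zv

/-- `P^N((Y = yv)_{X ← xv} | U = u, V = v)`: the probability of a basic counterfactual
computed in the PO-SCM `M^N`, conditional on the exogenous and endogenous variables of
`M` only (marginalizing over the potential outcome variables). -/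
def pnBasicCond (a : Asg Val) (X : Finset ν) (xv : Asg Val) (Y : Finset ν) (yv : Asg Val) : ℝ :=
  extBasicCond M.MN a X xv Y yv

/-- A canonical SCM for `M`, determined by a distribution `q` of the response variables:
the SCM over the canonical frame, which adds for each endogenous variable `X` an
exogenous response variable `U_X` ranging over the functions `f_X : R(Pa_X) → R(X)`,
with the structural equation `X = f_X(Pa_X)` where `f_X` is the value of `U_X`. -/
def canonSCM (q : (p : RVI M) → RType M p.1 → ℝ) : CM (ν ⊕ RVI M) (SumVal Val (RB M)) where
  exo := (M.exo.image Sum.inl) ∪ (univ.image Sum.inr)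
  pa := fun i =>
    match i with
    | .inl j => ((M.pa j).image Sum.inl) ∪
        ((univ.filter fun p : RVI M => p.1 = j).image Sum.inr)
    | .inr _ => ∅
  ord := fun i =>
    match i with
    | .inl j => M.ord j + 1
    | .inr _ => 0
  cpt := fun i =>
    match i with
    | .inl j => fun w x =>
        if h : j ∈ M.exo then M.cpt j (fun k => w (Sum.inl k)) x
        else if x = w (Sum.inr ⟨j, h⟩) (fun k => w (Sum.inl k.1)) then 1 else 0
    | .inr p => fun _ x => q p x

/-- `q` is the distribution of the response variables of a canonical SCM for `M`:
it is a probability distribution (the response variables being mutually independent and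
independent of the exogenous variables of `M`, whose distribution is kept), and it
reproduces the conditional probability tables of `M`:
`P_M(X = x | Pa_X = pa_X) = Σ_{f_X with f_X(pa_X) = x} P(U_X = f_X)`. -/
def IsCanonicalDist (q : (p : RVI M) → RType M p.1 → ℝ) : Prop :=
  (∀ p x, 0 ≤ q p x) ∧ (∀ p, ∑ f, q p f = 1) ∧
  ∀ (p : RVI M) (κ : M.PaAsg p.1) (x : Val p.1),
    M.cpt p.1 (M.extendPa p.1 κ) x = ∑ f ∈ univ.filter (fun f : RType M p.1 => f κ = x), q p f

/-- The distribution of the response variables of the GH-SCM: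
`P(U_X = f_X) = ∏_{pa_X} P_M(X = f_X(pa_X) | Pa_X = pa_X)`. -/
def qGH : (p : RVI M) → RType M p.1 → ℝ := fun p f =>
  ∏ κ : M.PaAsg p.1, M.cpt p.1 (M.extendPa p.1 κ) (f κ)

end CM

/-- A default assignment. -/
def dfltAsg {ν : Type} (Val : ν → Type) [∀ i, Nonempty (Val i)] : Asg Val :=
  fun i => Classical.arbitrary (Val i)

/-- The causal model of Example 4: binary endogenous variables `X` (index `false`) and
`Y` (index `true`) with graph `X → Y`, `P(X=1) = px1`, `P(Y=1 | X=1) = p` and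
`P(Y=1 | X=0) = q` (the exogenous variables determining `X` are left implicit:
`X` has no parents). Values: `true` is `1`, `false` is `0`. -/
def M2 (p q px1 : ℝ) : CM Bool (fun _ => Bool) where
  exo := ∅
  pa := fun i => match i with
    | false => ∅
    | true => {false}
  ord := fun i => match i with
    | false => 0
    | true => 1
  cpt := fun i => match i with
    | false => fun _ b => if b then px1 else 1 - px1
    | true => fun w b =>
        if w false then (if b then p else 1 - p) else (if b then q else 1 - q)

theorem sum_agree_eq_sum_agree_insert {ν : Type} {Val : ν → Type} {R : Type*} [Fintype ν]
    [∀ i, Fintype (Val i)] [AddCommMonoid R] {S : Finset ν} {i : ν} (hi : i ∉ S) (v : Asg Val)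
    (f : Asg Val → R) :
    ∑ w : Asg Val with ∀ j ∈ S, w j = v j, f w =
      ∑ w : Asg Val with ∀ j ∈ insert i S, w j = v j, ∑ x, f (Function.update w i x) := by
  rw [← sum_product']
  refine sum_nbij' (fun w => (Function.update w i (v i), w i))
    (fun z => Function.update z.1 i z.2) ?_ ?_ ?_ ?_ ?_
  · intro w hw
    simp only [mem_filter_univ, mem_product, mem_univ, and_true, mem_insert, forall_eq_or_imp,
      Function.update_self, true_and] at hw ⊢
    intro j hj
    rw [Function.update_of_ne (ne_of_mem_of_not_mem hj hi), hw j hj]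
  · rintro ⟨w, x⟩ hw
    simp only [mem_filter_univ, mem_product, mem_univ, and_true, mem_insert,
      forall_eq_or_imp] at hw ⊢
    intro j hj
    rw [Function.update_of_ne (ne_of_mem_of_not_mem hj hi), hw.2 j hj]
  · simp
  · rintro ⟨w, x⟩ hw
    simp only [mem_filter_univ, mem_product, mem_univ, and_true, mem_insert,
      forall_eq_or_imp] at hw
    simp [← hw.1]
  · simp

namespace CM

section MarkovFactorization

variable {ν : Type} {Val : ν → Type} [Fintype ν] [∀ i, Fintype (Val i)] {M : CM ν Val}

/-- The probability `P(Z = zv)` of an actual event. -/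
def probEvent (M : CM ν Val) (Z : Finset ν) (zv : Asg Val) : ℝ :=
  ∑ w : Asg Val with ∀ i ∈ Z, w i = zv i, M.joint w

theorem WF.notMem_pa_self (hM : M.WF) (i : ν) : i ∉ M.pa i :=
  fun h => (hM.acyclic i i h).false

theorem WF.cpt_update_of_notMem_pa (hM : M.WF) {i r : ν} (hr : r ∉ M.pa i) (w : Asg Val)
    (y : Val r) : M.cpt i (Function.update w r y) = M.cpt i w :=
  funext fun x => hM.cpt_pa i _ _ x fun _ hj =>
    Function.update_of_ne (ne_of_mem_of_not_mem hj hr) _ _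

theorem WF.sum_agree_prod_cpt_eq_erase (hM : M.WF) {S T : Finset ν} {r : ν} (hrS : r ∉ S)
    (hrT : r ∈ T) (v : Asg Val)
    (hcpt : ∀ w w' : Asg Val, (∀ j ∈ S, w j = v j) → (∀ j ≠ r, w' j = w j) →
      ∀ i ∈ T, i ≠ r → M.cpt i w' (w i) = M.cpt i w (w i)) :
    ∑ w : Asg Val with ∀ j ∈ S, w j = v j, ∏ i ∈ T, M.cpt i w (w i) =
      ∑ w : Asg Val with ∀ j ∈ insert r S, w j = v j,
        ∏ i ∈ T.erase r, M.cpt i w (w i) := by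
  rw [sum_agree_eq_sum_agree_insert hrS]
  refine sum_congr rfl fun w hw => ?_
  have hwS : ∀ j ∈ S, w j = v j := fun j hj =>
    (mem_filter_univ w).1 hw j (mem_insert_of_mem hj)
  have hfactor (y : Val r) :
      ∏ i ∈ T, M.cpt i (Function.update w r y) (Function.update w r y i) =
        M.cpt r w y * ∏ i ∈ T.erase r, M.cpt i w (w i) := by
    rw [← mul_prod_erase T _ hrT, Function.update_self,
      hM.cpt_update_of_notMem_pa (hM.notMem_pa_self r)]
    congr 1
    refine prod_congr rfl fun i hi => ?_
    obtain ⟨hir, hiT⟩ := mem_erase.1 hi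
    rw [Function.update_of_ne hir,
      hcpt w _ hwS (fun j hj => Function.update_of_ne hj _ _) i hiT hir]
  simp only [hfactor, ← sum_mul, hM.cpt_sum, one_mul]

theorem WF.sum_agree_prod_compl_cpt (hM : M.WF) (S : Finset ν) (v : Asg Val) :
    ∑ w : Asg Val with ∀ j ∈ S, w j = v j, ∏ i ∈ Sᶜ, M.cpt i w (w i) = 1 := by
  induction hn : #Sᶜ generalizing S with
  | zero =>
    have hS : S = univ := by simpa using hn
    subst hS
    simp [← funext_iff, filter_eq']
  | succ n ih =>
    have hne : Sᶜ.Nonempty := card_pos.1 (by omega)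
    obtain ⟨r, hr, hmax⟩ := exists_max_image Sᶜ M.ord hne
    rw [hM.sum_agree_prod_cpt_eq_erase (mem_compl.1 hr) hr v, ← compl_insert]
    · exact ih _ (by rw [compl_insert, card_erase_of_mem hr, hn, Nat.add_sub_cancel])
    · intro w w' _ hw' i hi _
      have hri : r ∉ M.pa i := fun h => (hM.acyclic i r h).not_ge (hmax i hi)
      exact hM.cpt_pa i w' w _ fun j hj => hw' j (ne_of_mem_of_not_mem hj hri)

theorem WF.sum_agree_pdo (hM : M.WF) {X T : Finset ν} (hXT : Disjoint X T)
    (hpa : ∀ i ∈ T, M.pa i ⊆ X ∪ T) {xv v : Asg Val} (hv : ∀ i ∈ X, v i = xv i) :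
    ∑ w : Asg Val with ∀ i ∈ T, w i = v i, M.pdo X xv w = ∏ i ∈ T, M.cpt i v (v i) := by
  have hsplit (w : Asg Val) (hw : ∀ i ∈ X ∪ T, w i = v i) : ∏ i ∈ Xᶜ, M.cpt i w (w i) =
      (∏ i ∈ T, M.cpt i v (v i)) * ∏ i ∈ (X ∪ T)ᶜ, M.cpt i w (w i) := by
    have hTX : T ⊆ Xᶜ := fun i hi => mem_compl.2 (disjoint_right.1 hXT hi)
    rw [← prod_sdiff hTX, mul_comm, compl_union, ← sdiff_eq_inter_compl]
    congr 1
    refine prod_congr rfl fun i hi => ?_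
    rw [hw i (mem_union_right X hi)]
    exact hM.cpt_pa i w v _ fun j hj => hw j (hpa i hi hj)
  have hagree (w : Asg Val) : ((∀ i ∈ T, w i = v i) ∧ ∀ i ∈ X, w i = xv i) ↔
      ∀ i ∈ X ∪ T, w i = v i := by
    rw [forall_mem_union, and_comm]
    exact and_congr_left fun _ => forall₂_congr fun i hi => by rw [hv i hi]
  calc ∑ w : Asg Val with ∀ i ∈ T, w i = v i, M.pdo X xv w
      = ∑ w : Asg Val with ∀ i ∈ X ∪ T, w i = v i, ∏ i ∈ Xᶜ, M.cpt i w (w i) := by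
        simp only [pdo, ← sum_filter, filter_filter, hagree]
    _ = (∏ i ∈ T, M.cpt i v (v i)) *
          ∑ w : Asg Val with ∀ i ∈ X ∪ T, w i = v i,
            ∏ i ∈ (X ∪ T)ᶜ, M.cpt i w (w i) := by
        rw [mul_sum]
        exact sum_congr rfl fun w hw => hsplit w ((mem_filter_univ w).1 hw)
    _ = ∏ i ∈ T, M.cpt i v (v i) := by rw [hM.sum_agree_prod_compl_cpt, mul_one]

/-- The mass condition keeps the conditional probability from being the junk value `0 / 0`. -/
theorem WF.cfBasic_singleton_of_agree (hM : M.WF) {X : Finset ν} {Y : ν}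
    (hX : Disjoint X M.exo) (hYX : Y ∉ X) (hYexo : Y ∉ M.exo)
    (hpa : ∀ j ∈ M.pa Y, j ∈ X ∨ j ∈ M.exo) {xv yv w v : Asg Val} (hvX : ∀ i ∈ X, v i = xv i)
    (hvexo : ∀ i ∈ M.exo, v i = w i) (hvY : v Y = yv Y)
    (hmass : ∏ i ∈ M.exo, M.cpt i v (v i) ≠ 0) :
    M.cfBasic X xv {Y} yv w = M.cpt Y v (yv Y) := by
  have hpaexo (i : ν) (hi : i ∈ M.exo) : M.pa i ⊆ X ∪ M.exo := by simp [hM.pa_exo i hi]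
  have hagree (w' : Asg Val) : (∀ i ∈ M.exo, w' i = w i) ↔ ∀ i ∈ M.exo, w' i = v i :=
    forall₂_congr fun i hi => by rw [hvexo i hi]
  have hagreeY (w' : Asg Val) :
      ((∀ i ∈ M.exo, w' i = w i) ∧ ∀ i ∈ ({Y} : Finset ν), w' i = yv i) ↔
        ∀ i ∈ insert Y M.exo, w' i = v i := by
    simp only [hagree, mem_singleton, forall_eq, forall_mem_insert, hvY, and_comm]
  have hpaY : ∀ i ∈ insert Y M.exo, M.pa i ⊆ X ∪ insert Y M.exo := by
    rw [union_insert, forall_mem_insert]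
    exact ⟨fun j hj => mem_insert_of_mem (mem_union.2 (hpa j hj)),
      fun i hi => (hpaexo i hi).trans (subset_insert _ _)⟩
  rw [cfBasic, ← sum_filter, ← sum_filter]
  simp only [hagreeY]
  simp only [hagree]
  rw [hM.sum_agree_pdo hX hpaexo hvX,
    hM.sum_agree_pdo (disjoint_insert_right.2 ⟨hYX, hX⟩) hpaY hvX, prod_insert hYexo,
    mul_div_cancel_right₀ _ hmass, hvY]

theorem WF.cfBasic_singleton (hM : M.WF) {X : Finset ν} [∀ i, Decidable (i ∈ X)] {Y : ν}
    (hX : Disjoint X M.exo) (hYX : Y ∉ X) (hYexo : Y ∉ M.exo)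
    (hpa : ∀ j ∈ M.pa Y, j ∈ X ∨ j ∈ M.exo) (xv yv : Asg Val) {w : Asg Val}
    (hmass : ∏ i ∈ M.exo, M.cpt i w (w i) ≠ 0) :
    M.cfBasic X xv {Y} yv w = M.cpt Y (X.piecewise xv w) (yv Y) := by
  let v : Asg Val := Function.update (X.piecewise xv w) Y (yv Y)
  have hvX (i : ν) (hi : i ∈ X) : v i = xv i := by
    simp only [v, Function.update_of_ne (ne_of_mem_of_not_mem hi hYX), piecewise_eq_of_mem, hi]
  have hvexo (i : ν) (hi : i ∈ M.exo) : v i = w i := by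
    simp only [v, Function.update_of_ne (ne_of_mem_of_not_mem hi hYexo),
      piecewise_eq_of_notMem _ _ _ (disjoint_right.1 hX hi)]
  have hmassv : ∏ i ∈ M.exo, M.cpt i v (v i) = ∏ i ∈ M.exo, M.cpt i w (w i) :=
    prod_congr rfl fun i hi => by
      rw [hvexo i hi]
      exact hM.cpt_pa i v w _ (by simp [hM.pa_exo i hi])
  rw [hM.cfBasic_singleton_of_agree hX hYX hYexo hpa hvX hvexo (Function.update_self ..)
    (hmassv ▸ hmass), hM.cpt_update_of_notMem_pa (hM.notMem_pa_self Y)]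

theorem WF.sum_joint_agree_and_root_eq (hM : M.WF) {Z : Finset ν} {r : ν} (hrZ : r ∉ Z)
    (hroot : M.pa r = ∅) (zv : Asg Val) (y : Val r)
    (hcpt : ∀ w w' : Asg Val, (∀ j ∈ Z, w j = zv j) → (∀ j ≠ r, w' j = w j) →
      ∀ i ≠ r, M.cpt i w' (w i) = M.cpt i w (w i)) :
    ∑ w : Asg Val with (∀ j ∈ Z, w j = zv j) ∧ w r = y, M.joint w =
      M.cpt r zv y * M.probEvent Z zv := by
  let v : Asg Val := Function.update zv r y
  have hvr : v r = y := Function.update_self ..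
  have hvZ (w : Asg Val) : (∀ j ∈ Z, w j = v j) ↔ ∀ j ∈ Z, w j = zv j :=
    forall₂_congr fun j hj => by
      simp only [v, Function.update_of_ne (ne_of_mem_of_not_mem hj hrZ)]
  have hsplit (w : Asg Val) (hw : w r = y) :
      M.joint w = M.cpt r zv y * ∏ i ∈ univ.erase r, M.cpt i w (w i) := by
    rw [joint, ← mul_prod_erase univ _ (mem_univ r), hw,
      hM.cpt_pa r w zv _ (by simp [hroot])]
  have hsumOut := hM.sum_agree_prod_cpt_eq_erase hrZ (mem_univ r) v
    fun w w' hw hw' i _ => hcpt w w' ((hvZ w).1 hw) hw' i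
  simp only [forall_mem_insert, hvZ, hvr, and_comm (a := _ = y)] at hsumOut
  rw [probEvent]
  simp only [joint] at hsplit ⊢
  rw [hsumOut, mul_sum]
  exact sum_congr rfl fun w hw => hsplit w ((mem_filter_univ w).1 hw).2

theorem WF.cfProbCond_singleton_eq_cpt_root (hM : M.WF) {Z : Finset ν} {r : ν} (hrZ : r ∉ Z)
    (hroot : M.pa r = ∅) {zv : Asg Val}
    (hcpt : ∀ w w' : Asg Val, (∀ j ∈ Z, w j = zv j) → (∀ j ≠ r, w' j = w j) →
      ∀ i ≠ r, M.cpt i w' (w i) = M.cpt i w (w i))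
    (hpos : M.probEvent Z zv ≠ 0) {e : CFEvent ν Val} {y : Val r}
    (he : ∀ w, M.joint w ≠ 0 →
      M.cfBasic e.X e.xv e.Y e.yv w = if w r = y then 1 else 0) :
    M.cfProbCond [e] Z zv = M.cpt r zv y := by
  have hterm (w : Asg Val) :
      (if ∀ i ∈ Z, w i = zv i then M.cfBasic e.X e.xv e.Y e.yv w else 0) * M.joint w =
        if (∀ i ∈ Z, w i = zv i) ∧ w r = y then M.joint w else 0 := by
    by_cases hw : M.joint w = 0
    · simp [hw]
    · simp only [he w hw, ← ite_and, ite_mul, one_mul, zero_mul]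
  simp only [cfProbCond, List.map_cons, List.map_nil, List.prod_singleton, hterm, ← sum_filter]
  rw [hM.sum_joint_agree_and_root_eq hrZ hroot zv y hcpt]
  exact mul_div_cancel_right₀ _ hpos

end MarkovFactorization

end CM

/-- The restriction of an assignment on `ν ⊕ β` to `ν`. -/
def baseAsg {ν β : Type} {Val : ν → Type} {B : β → Type} (w : Asg (SumVal Val B)) : Asg Val :=
  fun i => w (Sum.inl i)

/-- The assignment on `ν ⊕ β` with restrictions `a` to `ν` and `b` to `β`. -/
def sumAsg {ν β : Type} {Val : ν → Type} {B : β → Type} (a : Asg Val) (b : Asg B) :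
    Asg (SumVal Val B)
  | .inl i => a i
  | .inr j => b j

/-- The instance on `Asg (SumVal Val B)` is a variable because the one in the probabilities of a
`CM (ν ⊕ β) (SumVal Val B)` is built from `Classical.propDecidable`, not `instDecidableEqSum`. -/
theorem sum_asg_sumVal {ν β : Type} {Val : ν → Type} {B : β → Type} {R : Type*} [Fintype ν]
    [Fintype β] [∀ i, Fintype (Val i)] [∀ j, Fintype (B j)] [AddCommMonoid R]
    {_ : Fintype (Asg (SumVal Val B))} (f : Asg (SumVal Val B) → R) :
    ∑ w, f w = ∑ a : Asg Val, ∑ b : Asg B, f (sumAsg a b) := by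
  rw [← Fintype.sum_prod_type' fun a b => f (sumAsg a b)]
  refine Fintype.sum_equiv (Equiv.sumPiEquivProdPi _) _ _ fun w => congrArg f ?_
  funext i
  cases i <;> rfl

theorem prod_mem_mul_prod_notMem {ι R : Type*} [Fintype ι] [CommMonoid R] (s : Finset ι)
    (f : ι → R) :
    (∏ i ∈ s, f i) * ∏ i : {i // i ∉ s}, f i = ∏ i, f i := by
  rw [← prod_mul_prod_compl s, prod_subtype sᶜ fun i => mem_compl]

namespace CM

section POSCM

variable {ν : Type} {Val : ν → Type} {M : CM ν Val}

/-- The value of the parents of `i` under the assignment `a`. -/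
def paVal (M : CM ν Val) (i : ν) (a : Asg Val) : M.PaAsg i := fun j => a j.1

/-- The index of the potential outcome variable `i_κ` of the PO-SCM. -/
def poIdx (M : CM ν Val) {i : ν} (hi : i ∉ M.exo) (κ : M.PaAsg i) : POI M := ⟨⟨i, hi⟩, κ⟩

/-- The value of the potential outcome variable `i_κ` in the world `w` of the PO-SCM, retyped from
`POB M (M.poIdx hi κ)` to `Val i`. -/
def potentialOutcome (w : Asg (SumVal Val (POB M))) {i : ν} (hi : i ∉ M.exo) (κ : M.PaAsg i) :
    Val i :=
  w (Sum.inr (M.poIdx hi κ))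

theorem paVal_congr {i : ν} {a b : Asg Val} (h : ∀ j ∈ M.pa i, a j = b j) :
    M.paVal i a = M.paVal i b :=
  funext fun j => h j.1 j.2

variable [Fintype ν] [∀ i, Fintype (Val i)]

theorem prod_POI {R : Type*} [CommMonoid R] (F : POI M → R) :
    ∏ r, F r = ∏ i : {i // i ∉ M.exo}, ∏ κ : M.PaAsg i, F (M.poIdx i.2 κ) :=
  Fintype.prod_sigma fun r : (Σ i : {i // i ∉ M.exo}, M.PaAsg i) => F r

variable [∀ i, Nonempty (Val i)]

theorem WF.cpt_extendPa_paVal (hM : M.WF) (i : ν) (a : Asg Val) (x : Val i) :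
    M.cpt i (M.extendPa i (M.paVal i a)) x = M.cpt i a x :=
  hM.cpt_pa i _ _ x fun _ hj => dif_pos hj

theorem MN_cpt_inl_of_mem {i : ν} (hi : i ∈ M.exo) (w : Asg (SumVal Val (POB M)))
    (x : SumVal Val (POB M) (Sum.inl i)) :
    M.MN.cpt (Sum.inl i) w x = M.cpt i (baseAsg w) x :=
  dif_pos hi

theorem MN_cpt_inl_of_notMem {i : ν} (hi : i ∉ M.exo) (w : Asg (SumVal Val (POB M)))
    (x : SumVal Val (POB M) (Sum.inl i)) :
    M.MN.cpt (Sum.inl i) w x =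
      if x = potentialOutcome w hi (M.paVal i (baseAsg w)) then 1 else 0 :=
  dif_neg hi

theorem inl_mem_MN_exo {i : ν} : Sum.inl i ∈ M.MN.exo ↔ i ∈ M.exo := by
  simp [MN]

theorem inr_mem_MN_exo (r : POI M) : Sum.inr r ∈ M.MN.exo := by
  simp [MN]

theorem inl_mem_MN_pa_inl {i j : ν} : Sum.inl j ∈ M.MN.pa (Sum.inl i) ↔ j ∈ M.pa i := by
  simp [MN]

theorem inr_mem_MN_pa_inl {i : ν} {r : POI M} :
    Sum.inr r ∈ M.MN.pa (Sum.inl i) ↔ r.1.1 = i := by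
  simp [MN]

theorem WF.MN (hM : M.WF) : M.MN.WF where
  pa_exo
    | .inl i, hi => by
      rw [inl_mem_MN_exo] at hi
      refine eq_empty_of_forall_notMem fun j hj => ?_
      cases j with
      | inl j => simp [inl_mem_MN_pa_inl, hM.pa_exo i hi] at hj
      | inr r => exact r.1.2 (inr_mem_MN_pa_inl.1 hj ▸ hi)
    | .inr _, _ => rfl
  acyclic
    | .inl i, .inl j, hj => Nat.succ_lt_succ (hM.acyclic i j (inl_mem_MN_pa_inl.1 hj))
    | .inl i, .inr _, _ => Nat.succ_pos (M.ord i)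
    | .inr _, j, hj => absurd hj (notMem_empty j)
  cpt_pa
    | .inl i, w, w', x, h => by
      have hpa (j : ν) (hj : j ∈ M.pa i) : baseAsg w j = baseAsg w' j :=
        h _ (inl_mem_MN_pa_inl.2 hj)
      by_cases hi : i ∈ M.exo
      · rw [MN_cpt_inl_of_mem hi, MN_cpt_inl_of_mem hi]
        exact hM.cpt_pa i _ _ x hpa
      · have hpo (κ : M.PaAsg i) : potentialOutcome w hi κ = potentialOutcome w' hi κ :=
          h _ (inr_mem_MN_pa_inl.2 rfl)
        rw [MN_cpt_inl_of_notMem hi, MN_cpt_inl_of_notMem hi, hpo, paVal_congr hpa]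
    | .inr _, _, _, _, _ => rfl
  cpt_nonneg
    | .inl i, w, x => by
      by_cases hi : i ∈ M.exo
      · rw [MN_cpt_inl_of_mem hi]
        exact hM.cpt_nonneg i _ x
      · rw [MN_cpt_inl_of_notMem hi]
        split_ifs <;> norm_num
    | .inr _, _, x => hM.cpt_nonneg _ _ x
  cpt_sum
    | .inl i, w => by
      by_cases hi : i ∈ M.exo
      · simp only [MN_cpt_inl_of_mem hi]
        exact hM.cpt_sum i _
      · simp only [MN_cpt_inl_of_notMem hi]
        exact Fintype.sum_ite_eq' _ _
    | .inr _, _ => hM.cpt_sum _ _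

theorem MN_joint_sumAsg (a : Asg Val) (b : Asg (POB M)) :
    M.MN.joint (sumAsg a b) =
      (∏ i ∈ M.exo, M.cpt i a (a i)) *
        ∏ i : {i // i ∉ M.exo}, ∏ κ : M.PaAsg i,
          (if κ = M.paVal i a then if a i = b (M.poIdx i.2 κ) then 1 else 0 else 1) *
            M.cpt i (M.extendPa i κ) (b (M.poIdx i.2 κ)) := by
  rw [joint, Fintype.prod_sum_type, ← prod_mem_mul_prod_notMem M.exo,
    prod_POI, mul_assoc, ← prod_mul_distrib]
  congr 1
  · exact prod_congr rfl fun i hi => MN_cpt_inl_of_mem hi _ _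
  · refine prod_congr rfl fun i _ => ?_
    rw [prod_mul_distrib, Fintype.prod_ite_eq', MN_cpt_inl_of_notMem i.2]
    rfl

theorem WF.sum_MN_joint_sumAsg (hM : M.WF) (a : Asg Val) :
    ∑ b : Asg (POB M), M.MN.joint (sumAsg a b) = M.joint a := by
  let g (r : POI M) (x : POB M r) : ℝ :=
    (if r.2 = M.paVal r.1 a then if a r.1 = x then 1 else 0 else 1) *
      M.cpt r.1 (M.extendPa r.1 r.2) x
  have hg (i : {i // i ∉ M.exo}) (κ : M.PaAsg i) :
      ∑ x, g (M.poIdx i.2 κ) x = if κ = M.paVal i a then M.cpt i a (a i) else 1 := by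
    change ∑ x : Val i, (if κ = M.paVal i a then if a i = x then 1 else 0 else 1) *
      M.cpt i (M.extendPa i κ) x = _
    split_ifs with h
    · subst h
      simp only [ite_mul, one_mul, zero_mul, Fintype.sum_ite_eq, hM.cpt_extendPa_paVal]
    · simp only [one_mul, hM.cpt_sum]
  have hprod : ∑ b : Asg (POB M), ∏ r, g r (b r) = ∏ i : {i // i ∉ M.exo}, M.cpt i a (a i) := by
    rw [← Fintype.piFinset_univ, ← prod_univ_sum, prod_POI]
    simp only [hg, Fintype.prod_ite_eq']
  calc ∑ b : Asg (POB M), M.MN.joint (sumAsg a b)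
      = (∏ i ∈ M.exo, M.cpt i a (a i)) * ∑ b : Asg (POB M), ∏ r, g r (b r) := by
        rw [mul_sum]
        refine sum_congr rfl fun b _ => ?_
        rw [MN_joint_sumAsg, prod_POI]
        rfl
    _ = M.joint a := by
        rw [hprod, joint]
        exact prod_mem_mul_prod_notMem M.exo fun i => M.cpt i a (a i)

theorem WF.probEvent_MN_image_inl (hM : M.WF) (Z : Finset ν) (zv : Asg Val) :
    M.MN.probEvent (Z.image Sum.inl) (liftAsg zv) = M.probEvent Z zv := by
  have hevent (a : Asg Val) (b : Asg (POB M)) :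
      (∀ i ∈ Z.image Sum.inl, sumAsg a b i = liftAsg zv i) ↔ ∀ i ∈ Z, a i = zv i :=
    forall_mem_image
  rw [probEvent, sum_filter, sum_asg_sumVal, probEvent, sum_filter]
  refine sum_congr rfl fun a _ => ?_
  simp only [hevent, sum_ite_irrel, sum_const_zero, hM.sum_MN_joint_sumAsg]

theorem WF.MN_cfBasic_singleton (hM : M.WF) {X : Finset ν} {Y : ν} (hX : Disjoint X M.exo)
    (hYX : Y ∉ X) (hY : Y ∉ M.exo) (hpa : ∀ j ∈ M.pa Y, j ∈ X ∨ j ∈ M.exo) (xv yv : Asg Val)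
    {w : Asg (SumVal Val (POB M))} (hw : M.MN.joint w ≠ 0) :
    M.MN.cfBasic (X.image Sum.inl) (liftAsg xv) (({Y} : Finset ν).image Sum.inl) (liftAsg yv) w =
      if yv Y = potentialOutcome w hY (M.paVal Y (X.piecewise xv (baseAsg w)))
      then 1 else 0 := by
  have hdisj : Disjoint (X.image Sum.inl) M.MN.exo := by
    simp only [disjoint_left, forall_mem_image, inl_mem_MN_exo]
    exact fun i hi => disjoint_left.1 hX hi
  have hpaMN : ∀ j ∈ M.MN.pa (Sum.inl Y), j ∈ X.image Sum.inl ∨ j ∈ M.MN.exo := by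
    rintro (j | r) hj
    · simpa [inl_mem_MN_exo] using hpa j (inl_mem_MN_pa_inl.1 hj)
    · exact Or.inr (inr_mem_MN_exo r)
  have hmass : ∏ i ∈ M.MN.exo, M.MN.cpt i w (w i) ≠ 0 :=
    prod_ne_zero_iff.2 fun i _ => prod_ne_zero_iff.1 hw i (mem_univ i)
  have hpo (κ : M.PaAsg Y) :
      potentialOutcome ((X.image Sum.inl).piecewise (liftAsg xv) w) hY κ =
        potentialOutcome w hY κ :=
    piecewise_eq_of_notMem _ _ _ (by simp)
  have hbase : baseAsg ((X.image Sum.inl).piecewise (liftAsg (B := POB M) xv) w) =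
      X.piecewise xv (baseAsg w) := by
    funext i
    by_cases hi : i ∈ X
    · exact (piecewise_eq_of_mem _ _ _ (mem_image_of_mem _ hi)).trans
        (piecewise_eq_of_mem _ _ _ hi).symm
    · exact (piecewise_eq_of_notMem _ _ _ (by simpa using hi)).trans
        (piecewise_eq_of_notMem X xv (baseAsg w) hi).symm
  rw [image_singleton, hM.MN.cfBasic_singleton hdisj (by simpa using hYX)
    (by simpa [inl_mem_MN_exo] using hY) hpaMN _ _ hmass, MN_cpt_inl_of_notMem hY, hpo, hbase]
  rfl

theorem MN_cpt_eq_of_paVal_ne {Y : ν} (hY : Y ∉ M.exo) {κ : M.PaAsg Y}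
    {w w' : Asg (SumVal Val (POB M))} (hκ : M.paVal Y (baseAsg w) ≠ κ)
    (hw : ∀ i ≠ Sum.inr (M.poIdx hY κ), w' i = w i) (i : ν ⊕ POI M) :
    M.MN.cpt i w' = M.MN.cpt i w := by
  cases i with
  | inr _ => rfl
  | inl i =>
    funext x
    have hbase : baseAsg w' = baseAsg w := funext fun j => hw _ Sum.inl_ne_inr
    by_cases hi : i ∈ M.exo
    · rw [MN_cpt_inl_of_mem hi, MN_cpt_inl_of_mem hi, hbase]
    · have hne : M.poIdx hi (M.paVal i (baseAsg w)) ≠ M.poIdx hY κ := by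
        intro h
        obtain rfl : i = Y := congrArg (fun r => r.1.1) h
        exact hκ (eq_of_heq (Sigma.mk.inj h).2)
      have hpo : potentialOutcome w' hi (M.paVal i (baseAsg w)) =
          potentialOutcome w hi (M.paVal i (baseAsg w)) :=
        hw _ (Sum.inr_injective.ne hne)
      rw [MN_cpt_inl_of_notMem hi, MN_cpt_inl_of_notMem hi, hbase, hpo]

end POSCM

end CM

theorem pn_point_identifies_PN_general {ν : Type} {Val : ν → Type} [Fintype ν]
    [∀ i, Fintype (Val i)] [∀ i, Nonempty (Val i)] {M : CM ν Val} (hM : M.WF) {X Z : Finset ν}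
    {Y : ν} {xv zv : Asg Val} (hX : Disjoint X M.exo) (hYX : Y ∉ X) (hpa : M.pa Y ⊆ X)
    (hZ : ∃ j ∈ M.pa Y, j ∈ Z ∧ zv j ≠ xv j) (hpos : M.probEvent Z zv ≠ 0) (yv : Asg Val) :
    M.pnProbCond [⟨X, xv, {Y}, yv⟩] Z zv = M.cpt Y xv (yv Y) := by
  obtain ⟨j, hjY, hjZ, hj⟩ := hZ
  have hY : Y ∉ M.exo := fun h => by simp [hM.pa_exo Y h] at hjY
  have hexcl (w : Asg (SumVal Val (CM.POB M)))
      (hw : ∀ i ∈ Z.image Sum.inl, w i = liftAsg zv i) :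
      M.paVal Y (baseAsg w) ≠ M.paVal Y xv := fun h =>
    hj ((hw _ (mem_image_of_mem _ hjZ)).symm.trans (congrFun h ⟨j, hjY⟩))
  have hpaVal (w : Asg Val) : M.paVal Y (X.piecewise xv w) = M.paVal Y xv :=
    CM.paVal_congr fun i hi => piecewise_eq_of_mem _ _ _ (hpa hi)
  rw [← hM.cpt_extendPa_paVal Y xv]
  refine hM.MN.cfProbCond_singleton_eq_cpt_root (r := Sum.inr (M.poIdx hY (M.paVal Y xv)))
    (by simp) rfl ?_ ?_ ?_
  · intro w w' hw hw' i _
    rw [CM.MN_cpt_eq_of_paVal_ne hY (hexcl w hw) hw']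
  · rwa [hM.probEvent_MN_image_inl]
  · intro w hw
    refine (hM.MN_cfBasic_singleton hX hYX hY (fun i hi => .inl (hpa hi)) xv yv hw).trans ?_
    rw [hpaVal, eq_comm (a := yv Y)]
    rfl

section Example4

variable {p q px1 : ℝ}

theorem M2_wf (hp : p ∈ Set.Icc 0 1) (hq : q ∈ Set.Icc 0 1) (hpx1 : px1 ∈ Set.Icc 0 1) :
    (M2 p q px1).WF where
  pa_exo i hi := absurd hi (notMem_empty i)
  acyclic
    | true, j, hj => by
      obtain rfl := mem_singleton.1 hj
      exact Nat.zero_lt_one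
  cpt_pa
    | false, _, _, _, _ => rfl
    | true, w, w', x, h => by simp only [M2, h false (mem_singleton_self false)]
  cpt_nonneg
    | false, _, x => by
      cases x
      exacts [sub_nonneg.2 hpx1.2, hpx1.1]
    | true, w, x => by
      cases hw : w false <;> cases x <;>
        simp [M2, hw, hp.1, hp.2, hq.1, hq.2]
  cpt_sum
    | false, _ => by simp [M2]
    | true, w => by cases hw : w false <;> simp [M2, hw]

theorem M2_probEvent_true : (M2 p q px1).probEvent {false, true} (fun _ => true) = px1 * p := by
  have hevent (w : Asg fun _ : Bool => Bool) :
      (∀ i ∈ ({false, true} : Finset Bool), w i = true) ↔ w = fun _ => true := by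
    simp [funext_iff]
  simp only [CM.probEvent, hevent, filter_eq', mem_univ, if_true, sum_singleton, CM.joint]
  simp [M2, mul_comm]

end Example4

/-- In the model `M2` (with `0 < p < q < 1` and `P(X=1) > 0`), the PO-semantics
point-identifies the probability of necessity:
`P^N((Y=0)_{X←0} | X=1, Y=1) = 1 − q`. -/
theorem pn_point_identifies_PN (p q px1 : ℝ) (hp : 0 < p) (hpq : p < q) (hq : q < 1)
    (hpx0 : 0 < px1) (hpx1 : px1 ≤ 1) :
    (M2 p q px1).pnProbCond
        [⟨{false}, fun _ => false, {true}, fun _ => false⟩]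
        {false, true} (fun _ => true)
      = 1 - q := by
  have hM : (M2 p q px1).WF :=
    M2_wf ⟨hp.le, (hpq.trans hq).le⟩ ⟨(hp.trans hpq).le, hq.le⟩ ⟨hpx0.le, hpx1⟩
  have hpos : (M2 p q px1).probEvent {false, true} (fun _ => true) ≠ 0 :=
    M2_probEvent_true ▸ (mul_pos hpx0 hp).ne'
  calc (M2 p q px1).pnProbCond _ {false, true} (fun _ => true)
      = (M2 p q px1).cpt true (fun _ => false) false :=
        pn_point_identifies_PN_general (Y := true) hM (disjoint_empty_right _) (by simp)
          (subset_refl {false}) ⟨false, mem_singleton_self false, by simp⟩ hpos _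
    _ = 1 - q := by simp [M2]

end
end

section
/- Coarsening the exogenous variable of a deterministic model yields an irreducibly nondeterministic conditional distribution: let U be a finite set, P a probability distribution on U with P(u) > 0 for all u ∈ U, f : U → Y_vals a surjective function onto a finite set Y_vals with |Y_vals| > 2, u' ∈ U, and y₂ ∈ Y_vals with y₂ ≠ f(u'). Then P(U ≠ u') > 0 and 0 < P(f(U) = y₂ | U ≠ u') < 1. (Hence in the coarsened model with binary exogenous variable Z = 1{U = u'}, the conditional probability P(Y = y₂ | Z = 0) is strictly between 0 and 1, so the coarsened causal model is not a structural causal model.) -/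
open Finset

/-!
A third value `y₃` of `f`, besides `y₂` and `f u'`, splits the event `U ≠ u'`: it contains both
fibers `f = y₂` and `f = y₃`, so it carries mass inside as well as outside the event `f = y₂`.
-/

theorem sum_fiber_pos {ι κ M : Type*} [Fintype ι] [DecidableEq κ] [AddCommMonoid M]
    [PartialOrder M] [IsOrderedCancelAddMonoid M] {w : ι → M} (hw : ∀ i, 0 < w i) {f : ι → κ}
    (hf : Function.Surjective f) (k : κ) :
    0 < ∑ i with f i = k, w i := by
  obtain ⟨i, hi⟩ := hf k
  exact sum_pos (fun j _ => hw j) ⟨i, by simp [hi]⟩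

section OrderedField

variable {K : Type*} [Field K] [LinearOrder K] [IsStrictOrderedRing K]

theorem sum_filter_div_sum_mem_Ioo {ι : Type*} {s : Finset ι} {p : ι → Prop} [DecidablePred p]
    {w : ι → K} (hp : 0 < ∑ i ∈ s with p i, w i) (hnp : 0 < ∑ i ∈ s with ¬p i, w i) :
    (∑ i ∈ s with p i, w i) / ∑ i ∈ s, w i ∈ Set.Ioo 0 1 := by
  rw [← sum_filter_add_sum_filter_not s p w]
  have htotal := add_pos hp hnp
  exact ⟨div_pos hp htotal, (div_lt_one htotal).2 (lt_add_of_pos_right _ hnp)⟩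

theorem coarsening_yields_nondeterminism_general {U Yv : Type*} [Fintype U] [DecidableEq U]
    [DecidableEq Yv] {P : U → K} (hP : ∀ u, 0 ≤ P u) {f : U → Yv} {u' : U} {y₂ y₃ : Yv}
    (hpos₂ : 0 < ∑ u with f u = y₂, P u) (hpos₃ : 0 < ∑ u with f u = y₃, P u)
    (hy₂ : y₂ ≠ f u') (hy₃ : y₃ ≠ f u') (hy₃₂ : y₃ ≠ y₂) :
    (0 < ∑ u ∈ univ.filter (fun u => u ≠ u'), P u) ∧
    0 < (∑ u ∈ univ.filter (fun u => f u = y₂ ∧ u ≠ u'), P u) /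
        (∑ u ∈ univ.filter (fun u => u ≠ u'), P u) ∧
    (∑ u ∈ univ.filter (fun u => f u = y₂ ∧ u ≠ u'), P u) /
        (∑ u ∈ univ.filter (fun u => u ≠ u'), P u) < 1 := by
  have hmono {s t : Finset U} (hst : s ⊆ t) : ∑ u ∈ s, P u ≤ ∑ u ∈ t, P u :=
    sum_le_sum_of_subset_of_nonneg hst fun u _ _ => hP u
  have hevent : univ.filter (fun u => f u = y₂ ∧ u ≠ u') =
      (univ.filter (· ≠ u')).filter (f · = y₂) := by
    simp only [filter_filter, and_comm]
  have hinside : 0 < ∑ u ∈ univ.filter (· ≠ u') with f u = y₂, P u :=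
    hpos₂.trans_le (hmono fun u hu => by grind)
  have houtside : 0 < ∑ u ∈ univ.filter (· ≠ u') with ¬f u = y₂, P u :=
    hpos₃.trans_le (hmono fun u hu => by grind)
  rw [hevent]
  exact ⟨hinside.trans_le (hmono (filter_subset _ _)), sum_filter_div_sum_mem_Ioo hinside houtside⟩

end OrderedField

/-- Coarsening the exogenous variable of a deterministic model yields an irreducibly
nondeterministic conditional distribution: let `U` be a finite set, `P` a probability
distribution on `U` with `P(u) > 0` for all `u ∈ U`, `f : U → Y_vals` a surjective
function onto a finite set `Y_vals` with `|Y_vals| > 2`, `u' ∈ U`, and `y₂ ∈ Y_vals`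
with `y₂ ≠ f(u')`. Then `P(U ≠ u') > 0` and `0 < P(f(U) = y₂ | U ≠ u') < 1`.
(Hence, in the coarsened model with binary exogenous variable `Z = 1{U = u'}`, the
conditional probability `P(Y = y₂ | Z = 0)` is strictly between `0` and `1`, so the
coarsened causal model is not a structural causal model.) -/
theorem coarsening_yields_nondeterminism
    {U Yv : Type} [Fintype U] [DecidableEq U] [Fintype Yv] [DecidableEq Yv]
    (P : U → ℝ) (hpos : ∀ u, 0 < P u) (hsum : ∑ u, P u = 1)
    (f : U → Yv) (hsurj : Function.Surjective f) (hcard : 2 < Fintype.card Yv)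
    (u' : U) (y₂ : Yv) (hy : y₂ ≠ f u') :
    (0 < ∑ u ∈ univ.filter (fun u => u ≠ u'), P u) ∧
    0 < (∑ u ∈ univ.filter (fun u => f u = y₂ ∧ u ≠ u'), P u) /
        (∑ u ∈ univ.filter (fun u => u ≠ u'), P u) ∧
    (∑ u ∈ univ.filter (fun u => f u = y₂ ∧ u ≠ u'), P u) /
        (∑ u ∈ univ.filter (fun u => u ≠ u'), P u) < 1 := by
  obtain ⟨y₃, hy₃, hy₃₂⟩ : ∃ y₃, y₃ ≠ f u' ∧ y₃ ≠ y₂ :=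
    Cardinal.exists_ne_ne_of_three_le (by simpa using Nat.succ_le_of_lt hcard) (f u') y₂
  exact coarsening_yields_nondeterminism_general (fun u => (hpos u).le)
    (sum_fiber_pos hpos hsurj y₂) (sum_fiber_pos hpos hsurj y₃) hy hy₃ hy₃₂
end

section
/- For every causal model M, all Y, X, …, Z, W ⊆ V, all values y, x, …, z, w, all (u, v) with P_M(u, v) > 0, and all z' ∈ R(Z') for Z' ⊆ V with P_M(z') > 0: (i) P^GH(y_x, …, z_w) = P^N(y_x, …, z_w) = P^IC(y_x, …, z_w); (ii) P^B(y_x | u, v) = P^GH(y_x | u, v) = P^N(y_x | u, v) = P^IC(y_x | u, v); (iii) P^B(y_x | z') = P^GH(y_x | z') = P^N(y_x | z') = P^IC(y_x | z'); and (iv) for any binary X, Y ∈ V, PN^B = PN^GH = PN^N = PN^IC, PS^B = PS^GH = PS^N = PS^IC, and PNS^B = PNS^GH = PNS^N = PNS^IC. -/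
/-!
Pair a world `a` of `M` with a response profile `f`, which tells every endogenous variable how it
would react to each value of its parents. The response variables of the GH-SCM carry the profile
directly, and the potential outcome variables of the PO-SCM carry the same data curried; under
both models the profile has the same product law. The world, actual or under an intervention, is
determined by its exogenous part and the profile, so both models evaluate every counterfactual
identically, and the GH-SCM serves as the independent canonical SCM.

For the B-semantics, condition on the world `a`. The profiles generating `a` are those
taking the actual value at the actual parent values, so conditioning only replaces these entries
of the product law by point masses, which is exactly the GH law of the refinement `M^a`. Hence
`P^B` of a basic counterfactual is its conditional probability given `a`. A counterfactual whose
antecedent is actual in `a` has probability `0` or `1` given `a`, so the product rule of the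
B-semantics is correct as soon as at most one antecedent is not actual. For `PNS` this holds
because `X` is binary: one of the antecedents `X = 0` and `X = 1` is always actual.
-/

open Finset

noncomputable section

attribute [local instance] Classical.propDecidable

lemma prod_map_boole {α R : Type*} [CommMonoidWithZero R] (l : List α) (p : α → Prop) :
    (l.map fun x => if p x then (1 : R) else 0).prod = if ∀ x ∈ l, p x then 1 else 0 := by
  induction l with
  | nil => simp
  | cons x l ih =>
    simp only [List.map_cons, List.prod_cons, ih, List.forall_mem_cons, ite_and, boole_mul]

lemma sum_prod_filter_apply_eq {κ A R : Type*} [Fintype κ] [Fintype A] [Fintype (κ → A)]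
    [CommSemiring R] {c : κ → A → R} (hc : ∀ k, ∑ x, c k x = 1) (k₀ : κ) (x₀ : A) :
    ∑ f : κ → A with f k₀ = x₀, ∏ k, c k (f k) = c k₀ x₀ := by
  have hcylinder : ({f : κ → A | f k₀ = x₀} : Finset (κ → A)) =
      Fintype.piFinset fun k => ({x | k = k₀ → x = x₀} : Finset A) := by
    ext f
    simp
  rw [hcylinder, ← prod_univ_sum, Fintype.prod_eq_single k₀]
  · simp [sum_filter]
  · intro k hk
    simpa [hk] using hc k

/-- The antecedent of the counterfactual event `e` is actual in the world `a`. -/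
def CFEvent.Actual {ν : Type} {Val : ν → Type} (e : CFEvent ν Val) (a : Asg Val) : Prop :=
  ∀ i ∈ e.X, a i = e.xv i

lemma CFEvent.pairwise_actual_of_binary {ν : Type} {Val : ν → Type} {X : ν} {x0 x1 : Val X}
    (hbinary : ∀ x, x = x0 ∨ x = x1) {xv yv yv' : Asg Val} {Y Y' : Finset ν} (a : Asg Val) :
    [(⟨{X}, Function.update xv X x1, Y, yv⟩ : CFEvent ν Val),
      ⟨{X}, Function.update xv X x0, Y', yv'⟩].Pairwise fun e e' => e.Actual a ∨ e'.Actual a := by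
  simpa [Actual] using (hbinary (a X)).symm

namespace CM

section ResponseProfiles

variable {ν : Type} {Val : ν → Type} (M : CM ν Val)

/-- A response profile: one response function `f_X` for each endogenous variable `X`, that is,
a joint value of the exogenous variables of the canonical frame. -/
abbrev Resp : Type := (p : RVI M) → RType M p.1

/-- The restriction of an assignment to the parents of `i`. -/
def restrictPa (w : Asg Val) (i : ν) : M.PaAsg i := fun k => w k.1

variable {M} in
lemma restrictPa_eq_iff {w w' : Asg Val} {i : ν} :
    M.restrictPa w i = M.restrictPa w' i ↔ ∀ j ∈ M.pa i, w j = w' j :=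
  ⟨fun h j hj => congrFun h ⟨j, hj⟩, fun h => funext fun k => h k.1 k.2⟩

/-- The solution of the structural equations given by the response profile `f` under the
intervention `X ← xv`, where the exogenous variables have their values in `a`. The branch
`a k.1` is never reached when the graph is acyclic: it serves to make the recursion total. -/
def solution (f : M.Resp) (X : Finset ν) (xv a : Asg Val) (i : ν) : Val i :=
  if i ∈ X then xv i
  else if h : i ∈ M.exo then a i
  else f ⟨i, h⟩ fun k => if M.ord k.1 < M.ord i then solution f X xv a k.1 else a k.1
termination_by M.ord i

/-- The counterfactual event `e` is true when the exogenous variables have their values in `a`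
and the endogenous ones respond by `f`. -/
def Holds (e : CFEvent ν Val) (a : Asg Val) (f : M.Resp) : Prop :=
  ∀ i ∈ e.Y, M.solution f e.X e.xv a i = e.yv i

/-- The world `a` satisfies the structural equations given by the response profile `f`. -/
def Generates (f : M.Resp) (a : Asg Val) : Prop := ∀ p : RVI M, a p.1 = f p (M.restrictPa a p.1)

variable {M}

lemma restrictPa_extendPa [∀ i, Nonempty (Val i)] (i : ν) (κ : M.PaAsg i) :
    M.restrictPa (M.extendPa i κ) i = κ := by
  funext k
  simp [restrictPa, extendPa, k.2]

lemma eq_solution_iff (hacyc : ∀ i j, j ∈ M.pa i → M.ord j < M.ord i) {X : Finset ν}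
    (hX : ∀ i ∈ X, i ∉ M.exo) (f : M.Resp) (xv a w : Asg Val) :
    w = M.solution f X xv a ↔ (∀ i ∈ M.exo, w i = a i) ∧ (∀ i ∈ X, w i = xv i) ∧
      ∀ p : RVI M, p.1 ∉ X → w p.1 = f p (M.restrictPa w p.1) := by
  have heq (i : ν) : M.solution f X xv a i = if i ∈ X then xv i
      else if h : i ∈ M.exo then a i else f ⟨i, h⟩ (M.restrictPa (M.solution f X xv a) i) := by
    rw [solution]
    split_ifs with _ h
    · rfl
    · rfl
    · exact congrArg (f ⟨i, h⟩) (funext fun k => if_pos (hacyc i k.1 k.2))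
  constructor
  · rintro rfl
    refine ⟨fun i hi => ?_, fun i hi => ?_, fun p hp => ?_⟩
    · rw [heq, if_neg fun h => hX i h hi, dif_pos hi]
    · rw [heq, if_pos hi]
    · rw [heq, if_neg hp, dif_neg p.2]
      rfl
  · rintro ⟨hexo, hint, hresp⟩
    funext i
    induction i using (measure M.ord).wf.induction with
    | _ i ih =>
      rw [heq]
      split_ifs with hi hi'
      · exact hint i hi
      · exact hexo i hi'
      · rw [hresp ⟨i, hi'⟩ hi,
          restrictPa_eq_iff.2 fun j hj => ih j (hacyc i j hj)]

lemma Generates.solution_eq (hacyc : ∀ i j, j ∈ M.pa i → M.ord j < M.ord i) {f : M.Resp}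
    {a : Asg Val} (hf : M.Generates f a) {X : Finset ν} (hX : ∀ i ∈ X, i ∉ M.exo)
    {xv : Asg Val} (ha : ∀ i ∈ X, a i = xv i) : M.solution f X xv a = a :=
  ((eq_solution_iff hacyc hX f xv a a).2 ⟨fun _ _ => rfl, ha, fun p _ => hf p⟩).symm

end ResponseProfiles

section Factorization

variable {ν : Type} {Val : ν → Type} [Fintype ν]

lemma prod_compl_eq_prod_exo_mul (M : CM ν Val) {X : Finset ν} (hX : ∀ i ∈ X, i ∉ M.exo)
    (g : ν → ℝ) :
    ∏ i ∈ Xᶜ, g i = (∏ i ∈ M.exo, g i) * ∏ p : RVI M with p.1 ∉ X, g p.1 := by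
  calc
    _ = ∏ i, if i ∉ X then g i else 1 := by
      rw [← prod_filter, filter_notMem_eq_sdiff, compl_eq_univ_sdiff]
    _ = (∏ i ∈ M.exo, if i ∉ X then g i else 1) * ∏ i ∈ M.exoᶜ, if i ∉ X then g i else 1 :=
      (prod_mul_prod_compl _ _).symm
    _ = (∏ i ∈ M.exo, g i) * ∏ p : RVI M, if p.1 ∉ X then g p.1 else 1 :=
      congrArg₂ _ (prod_congr rfl fun i hi => if_pos fun h => hX i h hi)
        (prod_subtype _ (fun _ => mem_compl) _)
    _ = _ := by rw [prod_filter]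

variable (M : CM ν Val)

/-- The probability of the exogenous part of the world `a`. -/
def exoP (a : Asg Val) : ℝ := ∏ i ∈ M.exo, M.cpt i a (a i)

lemma pdo_empty (xv w : Asg Val) : M.pdo ∅ xv w = M.joint w := by
  simp [pdo, joint]

lemma pdo_eq {X : Finset ν} (hX : ∀ i ∈ X, i ∉ M.exo) (xv w : Asg Val) :
    M.pdo X xv w = if ∀ i ∈ X, w i = xv i then
      M.exoP w * ∏ p : RVI M with p.1 ∉ X, M.cpt p.1 w (w p.1) else 0 := by
  rw [pdo, exoP, M.prod_compl_eq_prod_exo_mul hX]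

lemma joint_eq (a : Asg Val) : M.joint a = M.exoP a * ∏ p : RVI M, M.cpt p.1 a (a p.1) := by
  simpa [pdo_empty] using M.pdo_eq (X := ∅) (by simp) a a

end Factorization

section ResponseLaw

variable {ν : Type} {Val : ν → Type} [Fintype ν] [∀ i, Fintype (Val i)] {M : CM ν Val}

lemma WF.exoP_congr (hM : M.WF) {a w : Asg Val} (h : ∀ i ∈ M.exo, w i = a i) :
    M.exoP w = M.exoP a := by
  refine prod_congr rfl fun i hi => ?_
  rw [h i hi]
  exact hM.cpt_pa i w a _ fun j hj => absurd hj (by simp [hM.pa_exo i hi])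

lemma WF.refine (hM : M.WF) (a : Asg Val) : (M.refine a).WF where
  pa_exo := hM.pa_exo
  acyclic := hM.acyclic
  cpt_pa i w w' x h := by
    have hpa : (∀ j ∈ M.pa i, w j = a j) ↔ ∀ j ∈ M.pa i, w' j = a j :=
      forall₂_congr fun j hj => by rw [h j hj]
    simp only [CM.refine, hpa, hM.cpt_pa i w w' x h]
  cpt_nonneg i w x := by
    simp only [CM.refine]
    split_ifs
    exacts [zero_le_one, le_rfl, hM.cpt_nonneg i w x]
  cpt_sum i w := by
    simp only [CM.refine]
    split_ifs
    exacts [Fintype.sum_ite_eq' (a i) _, hM.cpt_sum i w]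

variable [∀ i, Nonempty (Val i)]

lemma WF.cpt_extendPa_restrictPa (hM : M.WF) (i : ν) (w : Asg Val) (x : Val i) :
    M.cpt i (M.extendPa i (M.restrictPa w i)) x = M.cpt i w x :=
  hM.cpt_pa i _ w x fun j hj => by simp [extendPa, restrictPa, hj]

lemma WF.isCanonicalDist_qGH (hM : M.WF) : M.IsCanonicalDist M.qGH := by
  refine ⟨fun p f => prod_nonneg fun κ _ => hM.cpt_nonneg _ _ _, fun p => ?_, fun p κ x => ?_⟩
  · have hprod := Fintype.prod_sum fun (κ : M.PaAsg p.1) x => M.cpt p.1 (M.extendPa p.1 κ) x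
    simp only [hM.cpt_sum, prod_const_one] at hprod
    exact hprod.symm
  · exact (sum_prod_filter_apply_eq (fun κ => hM.cpt_sum p.1 (M.extendPa p.1 κ)) κ x).symm

lemma IsCanonicalDist.sum_prod_eq_prod_cpt (hM : M.WF) {q : (p : RVI M) → RType M p.1 → ℝ}
    (hq : M.IsCanonicalDist q) (X : Finset ν) (w : Asg Val) :
    (∑ f : M.Resp, if ∀ p : RVI M, p.1 ∉ X → w p.1 = f p (M.restrictPa w p.1)
      then ∏ p, q p (f p) else 0) = ∏ p : RVI M with p.1 ∉ X, M.cpt p.1 w (w p.1) := by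
  calc
    _ = ∑ f : M.Resp, ∏ p : RVI M,
        if p.1 ∉ X → w p.1 = f p (M.restrictPa w p.1) then q p (f p) else 0 := by
      simp only [prod_ite_zero, mem_univ, true_imp_iff]
    _ = ∏ p : RVI M, ∑ g : M.RType p.1,
        if p.1 ∉ X → w p.1 = g (M.restrictPa w p.1) then q p g else 0 :=
      (Fintype.prod_sum fun (p : RVI M) (g : M.RType p.1) =>
        if p.1 ∉ X → w p.1 = g (M.restrictPa w p.1) then q p g else 0).symm
    _ = ∏ p : RVI M, if p.1 ∉ X then M.cpt p.1 w (w p.1) else 1 := by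
      refine prod_congr rfl fun p _ => ?_
      by_cases hp : p.1 ∈ X
      · simpa only [hp, not_true_eq_false, false_imp_iff, if_true, if_false] using hq.2.1 p
      · rw [← hM.cpt_extendPa_restrictPa, hq.2.2 p, sum_filter]
        simp only [hp, not_false_eq_true, true_imp_iff, if_true, eq_comm]
    _ = _ := (prod_filter _ _).symm

variable (M)

/-- The probability of the response profile `f` in the GH-SCM. -/
def respP (f : M.Resp) : ℝ := ∏ p : RVI M, M.qGH p (f p)

/-- The joint probability of the world `a` and the response profile `f`. -/
def worldP (a : Asg Val) (f : M.Resp) : ℝ :=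
  if M.Generates f a then M.exoP a * M.respP f else 0

/-- The joint probability of the actual world being `a` and all counterfactual events in `evs`
being true, when the response functions are distributed as in the GH-SCM. -/
def cfJoint (evs : List (CFEvent ν Val)) (a : Asg Val) : ℝ :=
  ∑ f : M.Resp, if ∀ e ∈ evs, M.Holds e a f then M.worldP a f else 0

/-- The probability of a complex counterfactual under the law `worldP`; all the semantics are
compared with this one. -/
def respProb (evs : List (CFEvent ν Val)) : ℝ := ∑ a, M.cfJoint evs a

/-- The conditional version of `respProb`. -/
def respProbCond (evs : List (CFEvent ν Val)) (Z : Finset ν) (zv : Asg Val) : ℝ :=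
  (∑ a : Asg Val, if ∀ i ∈ Z, a i = zv i then M.cfJoint evs a else 0) /
    ∑ a : Asg Val, if ∀ i ∈ Z, a i = zv i then M.joint a else 0

variable {M}

lemma WF.sum_respP (hM : M.WF) : ∑ f, M.respP f = 1 := by
  have h := hM.isCanonicalDist_qGH.sum_prod_eq_prod_cpt hM univ
    fun i => Classical.arbitrary (Val i)
  simpa [respP] using h

lemma WF.sum_pdo (hM : M.WF) {X : Finset ν} (hX : ∀ i ∈ X, i ∉ M.exo) (xv a : Asg Val)
    (Q : Asg Val → Prop) [DecidablePred Q] :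
    (∑ w, if (∀ i ∈ M.exo, w i = a i) ∧ Q w then M.pdo X xv w else 0) =
      M.exoP a * ∑ f, if Q (M.solution f X xv a) then M.respP f else 0 := by
  have hterm (w : Asg Val) :
      (if (∀ i ∈ M.exo, w i = a i) ∧ Q w then M.pdo X xv w else 0) =
        ∑ f, if w = M.solution f X xv a then if Q w then M.exoP a * M.respP f else 0 else 0 := by
    simp only [eq_solution_iff hM.acyclic hX]
    by_cases hexo : ∀ i ∈ M.exo, w i = a i
    · by_cases hint : ∀ i ∈ X, w i = xv i
      · simp only [eq_true hexo, eq_true hint, true_and, M.pdo_eq hX, hM.exoP_congr hexo, if_true]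
        rw [← hM.isCanonicalDist_qGH.sum_prod_eq_prod_cpt hM, mul_sum]
        split_ifs <;> simp only [mul_ite, mul_zero, respP, ite_self, sum_const_zero]
      · simp only [eq_false hint, M.pdo_eq hX, false_and, and_false, if_false, ite_self,
          sum_const_zero]
    · simp only [eq_false hexo, false_and, if_false, sum_const_zero]
  simp only [hterm]
  rw [sum_comm, mul_sum]
  simp only [Fintype.sum_ite_eq', mul_ite, mul_zero]

lemma WF.cfBasic_eq (hM : M.WF) {X : Finset ν} (hX : ∀ i ∈ X, i ∉ M.exo) (xv : Asg Val)
    (Y : Finset ν) (yv : Asg Val) {a : Asg Val} (ha : M.exoP a ≠ 0) :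
    M.cfBasic X xv Y yv a = ∑ f, if M.Holds ⟨X, xv, Y, yv⟩ a f then M.respP f else 0 := by
  have hden := hM.sum_pdo hX xv a fun _ => True
  simp only [and_true, if_true, hM.sum_respP, mul_one] at hden
  rw [cfBasic, hM.sum_pdo hX xv a fun w => ∀ i ∈ Y, w i = yv i, hden, mul_div_cancel_left₀ _ ha]
  exact sum_congr rfl fun f _ => if_congr Iff.rfl rfl rfl

end ResponseLaw

section Refinement

variable {ν : Type} {Val : ν → Type} [Fintype ν]

lemma solution_refine {M : CM ν Val} (hacyc : ∀ i j, j ∈ M.pa i → M.ord j < M.ord i)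
    {X : Finset ν} (hX : ∀ i ∈ X, i ∉ M.exo) (f : M.Resp) (xv a b : Asg Val) :
    (M.refine a).solution f X xv b = M.solution f X xv b :=
  (eq_solution_iff hacyc hX f xv b _).2
    ((eq_solution_iff (M := M.refine a) hacyc hX f xv b _).1 rfl)

lemma exoP_refine (M : CM ν Val) (a b : Asg Val) : (M.refine a).exoP b = M.exoP b :=
  prod_congr rfl fun _ hi => if_neg fun h => h.1 hi

variable [∀ i, Fintype (Val i)] [∀ i, Nonempty (Val i)] {M : CM ν Val}

lemma WF.cpt_mul_qGH_refine (hM : M.WF) (a : Asg Val) (p : RVI M) (g : RType M p.1) :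
    M.cpt p.1 a (a p.1) * (M.refine a).qGH p g =
      if a p.1 = g (M.restrictPa a p.1) then M.qGH p g else 0 := by
  have hactual (κ : M.PaAsg p.1) :
      (p.1 ∉ M.exo ∧ ∀ j ∈ M.pa p.1, M.extendPa p.1 κ j = a j) ↔ κ = M.restrictPa a p.1 := by
    rw [← restrictPa_eq_iff, restrictPa_extendPa]
    exact and_iff_right p.2
  have hrefine : (M.refine a).qGH p g = ∏ κ, if κ = M.restrictPa a p.1
      then (if g κ = a p.1 then 1 else 0) else M.cpt p.1 (M.extendPa p.1 κ) (g κ) :=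
    prod_congr rfl fun κ _ => if_congr (hactual κ) rfl rfl
  have hrest : ∏ κ ∈ univ.erase (M.restrictPa a p.1), (if κ = M.restrictPa a p.1
      then (if g κ = a p.1 then 1 else 0) else M.cpt p.1 (M.extendPa p.1 κ) (g κ)) =
      ∏ κ ∈ univ.erase (M.restrictPa a p.1), M.cpt p.1 (M.extendPa p.1 κ) (g κ) :=
    prod_congr rfl fun κ hκ => if_neg (ne_of_mem_erase hκ)
  rw [hrefine, qGH, ← mul_prod_erase univ _ (mem_univ (M.restrictPa a p.1)), hrest, if_pos rfl,
    ← mul_prod_erase univ _ (mem_univ (M.restrictPa a p.1)), hM.cpt_extendPa_restrictPa]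
  by_cases h : a p.1 = g (M.restrictPa a p.1)
  · rw [if_pos h.symm, if_pos h, one_mul, h]
  · rw [if_neg (Ne.symm h), if_neg h, zero_mul, mul_zero]

/-- Bayes' rule: given the world `a`, the response functions are distributed as in the GH-SCM of
the refinement of `M` at `a`. -/
lemma WF.worldP_eq_joint_mul (hM : M.WF) (a : Asg Val) (f : M.Resp) :
    M.worldP a f = M.joint a * (M.refine a).respP f := by
  have hprod : (∏ p : RVI M, M.cpt p.1 a (a p.1)) * (M.refine a).respP f =
      if M.Generates f a then M.respP f else 0 := by
    calc
      _ = ∏ p : RVI M, M.cpt p.1 a (a p.1) * (M.refine a).qGH p (f p) := prod_mul_distrib.symm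
      _ = ∏ p : RVI M, if a p.1 = f p (M.restrictPa a p.1) then M.qGH p (f p) else 0 :=
        prod_congr rfl fun p _ => hM.cpt_mul_qGH_refine a p (f p)
      _ = _ := by
        rw [prod_ite_zero]
        congr!
        simp [Generates]
  rw [joint_eq, mul_assoc, hprod, mul_ite, mul_zero, worldP]

lemma WF.cfJoint_eq_joint_mul (hM : M.WF) (evs : List (CFEvent ν Val)) (a : Asg Val) :
    M.cfJoint evs a =
      M.joint a * ∑ f : M.Resp, if ∀ e ∈ evs, M.Holds e a f then (M.refine a).respP f else 0 := by
  simp only [cfJoint, hM.worldP_eq_joint_mul, mul_sum, mul_ite, mul_zero]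

lemma WF.cfJoint_nil (hM : M.WF) (a : Asg Val) : M.cfJoint [] a = M.joint a := by
  have h := (hM.refine a).sum_respP
  simp only [hM.cfJoint_eq_joint_mul, List.not_mem_nil, false_imp_iff, implies_true, if_true]
  exact (congrArg _ h).trans (mul_one _)

lemma WF.pbBasic_mul_joint (hM : M.WF) (e : CFEvent ν Val) (hX : ∀ i ∈ e.X, i ∉ M.exo)
    (a : Asg Val) : M.pbBasic a e.X e.xv e.Y e.yv * M.joint a = M.cfJoint [e] a := by
  rw [hM.cfJoint_eq_joint_mul, mul_comm]
  rcases eq_or_ne (M.joint a) 0 with ha | ha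
  · rw [ha, zero_mul, zero_mul]
  have hexo : (M.refine a).exoP a ≠ 0 := by
    rw [exoP_refine]
    exact left_ne_zero_of_mul (M.joint_eq a ▸ ha)
  have hholds (f : M.Resp) : (M.refine a).Holds e a f ↔ ∀ e' ∈ [e], M.Holds e' a f := by
    rw [List.forall_mem_singleton]
    exact forall₂_congr fun i _ => by rw [solution_refine hM.acyclic hX]
  exact congrArg _ (((hM.refine a).cfBasic_eq hX e.xv e.Y e.yv hexo).trans
    (sum_congr rfl fun f _ => if_congr (hholds f) rfl rfl))

end Refinement

section ProductRule

variable {ν : Type} {Val : ν → Type} [Fintype ν] [∀ i, Fintype (Val i)] [∀ i, Nonempty (Val i)]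
  {M : CM ν Val} {a : Asg Val}

lemma cfJoint_perm {evs evs' : List (CFEvent ν Val)} (h : evs.Perm evs') (a : Asg Val) :
    M.cfJoint evs a = M.cfJoint evs' a := by
  simp only [cfJoint, h.mem_iff]

lemma WF.cfJoint_cons_of_actual (hM : M.WF) {e : CFEvent ν Val} (hX : ∀ i ∈ e.X, i ∉ M.exo)
    (he : e.Actual a) (evs : List (CFEvent ν Val)) :
    M.cfJoint (e :: evs) a = (if ∀ i ∈ e.Y, a i = e.yv i then 1 else 0) * M.cfJoint evs a := by
  rw [cfJoint, cfJoint, mul_sum]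
  refine sum_congr rfl fun f _ => ?_
  by_cases hf : M.Generates f a
  · have hholds : M.Holds e a f ↔ ∀ i ∈ e.Y, a i = e.yv i := by
      rw [Holds, hf.solution_eq hM.acyclic hX he]
    simp only [List.forall_mem_cons, hholds, ite_and, boole_mul]
  · simp only [worldP, if_neg hf, ite_self, mul_zero]

lemma WF.pbBasic_of_actual (hM : M.WF) (ha : M.joint a ≠ 0) {e : CFEvent ν Val}
    (hX : ∀ i ∈ e.X, i ∉ M.exo) (he : e.Actual a) :
    M.pbBasic a e.X e.xv e.Y e.yv = if ∀ i ∈ e.Y, a i = e.yv i then 1 else 0 := by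
  refine mul_right_cancel₀ ha ?_
  rw [hM.pbBasic_mul_joint e hX, hM.cfJoint_cons_of_actual hX he, hM.cfJoint_nil]

lemma WF.cfJoint_append_of_actual (hM : M.WF) (ha : M.joint a ≠ 0) {evs : List (CFEvent ν Val)}
    (hX : ∀ e ∈ evs, ∀ i ∈ e.X, i ∉ M.exo) (hactual : ∀ e ∈ evs, e.Actual a)
    (evs' : List (CFEvent ν Val)) :
    M.cfJoint (evs ++ evs') a =
      (evs.map fun e => M.pbBasic a e.X e.xv e.Y e.yv).prod * M.cfJoint evs' a := by
  induction evs with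
  | nil => simp
  | cons e evs ih =>
    rw [List.forall_mem_cons] at hX hactual
    rw [List.cons_append, hM.cfJoint_cons_of_actual hX.1 hactual.1, ih hX.2 hactual.2,
      ← hM.pbBasic_of_actual ha hX.1 hactual.1, List.map_cons, List.prod_cons, mul_assoc]

/-- The product rule of the B-semantics treats the events as independent given the world, which
is harmless as long as at most one of them is not decided by that world. -/
lemma WF.prod_pbBasic_mul_joint (hM : M.WF) {evs : List (CFEvent ν Val)}
    (hX : ∀ e ∈ evs, ∀ i ∈ e.X, i ∉ M.exo)
    (hactual : M.joint a ≠ 0 → evs.Pairwise fun e e' => e.Actual a ∨ e'.Actual a) :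
    (evs.map fun e => M.pbBasic a e.X e.xv e.Y e.yv).prod * M.joint a = M.cfJoint evs a := by
  rcases eq_or_ne (M.joint a) 0 with ha | ha
  · rw [hM.cfJoint_eq_joint_mul, ha, mul_zero, zero_mul]
  specialize hactual ha
  induction evs with
  | nil => simp [hM.cfJoint_nil]
  | cons e evs ih =>
    rw [List.forall_mem_cons] at hX
    rw [List.pairwise_cons] at hactual
    rw [List.map_cons, List.prod_cons, mul_assoc]
    by_cases he : e.Actual a
    · rw [ih hX.2 hactual.2, hM.cfJoint_cons_of_actual hX.1 he, hM.pbBasic_of_actual ha hX.1 he]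
    · have hevs : ∀ e' ∈ evs, e'.Actual a := fun e' h => (hactual.1 e' h).resolve_left he
      rw [cfJoint_perm (List.perm_append_singleton e evs).symm,
        hM.cfJoint_append_of_actual ha hX.2 hevs, ← hM.pbBasic_mul_joint e hX.1, mul_left_comm]

theorem WF.pbProb_eq_respProb (hM : M.WF) {evs : List (CFEvent ν Val)}
    (hX : ∀ e ∈ evs, ∀ i ∈ e.X, i ∉ M.exo)
    (hactual : ∀ a, M.joint a ≠ 0 → evs.Pairwise fun e e' => e.Actual a ∨ e'.Actual a) :
    M.pbProb evs = M.respProb evs :=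
  sum_congr rfl fun a _ => hM.prod_pbBasic_mul_joint hX (hactual a)

theorem WF.pbProbCond_eq_respProbCond (hM : M.WF) {evs : List (CFEvent ν Val)}
    (hX : ∀ e ∈ evs, ∀ i ∈ e.X, i ∉ M.exo)
    (hactual : ∀ a, M.joint a ≠ 0 → evs.Pairwise fun e e' => e.Actual a ∨ e'.Actual a)
    (Z : Finset ν) (zv : Asg Val) : M.pbProbCond evs Z zv = M.respProbCond evs Z zv := by
  simp only [pbProbCond, respProbCond, ite_mul, zero_mul,
    hM.prod_pbBasic_mul_joint hX (hactual _)]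

end ProductRule

section Deterministic

variable {ν : Type} {Val : ν → Type} [Fintype ν] [∀ i, Fintype (Val i)] {M : CM ν Val}

lemma cfBasic_of_pdo_eq_ite {X Y : Finset ν} {xv yv w w₀ : Asg Val} {c : ℝ} (hc : c ≠ 0)
    (hw₀ : ∀ i ∈ M.exo, w₀ i = w i)
    (hpdo : ∀ w', (∀ i ∈ M.exo, w' i = w i) → M.pdo X xv w' = if w' = w₀ then c else 0) :
    M.cfBasic X xv Y yv w = if ∀ i ∈ Y, w₀ i = yv i then 1 else 0 := by
  have hsum (Q : Asg Val → Prop) [DecidablePred Q] :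
      (∑ w', if (∀ i ∈ M.exo, w' i = w i) ∧ Q w' then M.pdo X xv w' else 0) =
        if Q w₀ then c else 0 := by
    rw [Fintype.sum_eq_single w₀]
    · simp only [eq_true hw₀, true_and, hpdo w₀ hw₀, if_true]
    · intro w' hne
      rw [ite_eq_right_iff]
      exact fun h => (hpdo w' h.1).trans (if_neg hne)
  have hden := hsum fun _ => True
  simp only [and_true, if_true] at hden
  rw [cfBasic, hsum fun w' => ∀ i ∈ Y, w' i = yv i, hden]
  simp only [ite_div, zero_div, div_self hc]

end Deterministic

section Glue

variable {ν β : Type} {Val : ν → Type} {B : β → Type}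

/-- The assignment on the extended signature whose two parts are `a` and `b`. -/
def glue (a : Asg Val) (b : Asg B) : Asg (SumVal Val B)
  | .inl i => a i
  | .inr k => b k

lemma glue_left_inj {a a' : Asg Val} {b : Asg B} : glue a b = glue a' b ↔ a = a' :=
  ⟨fun h => funext fun i => congrFun h (.inl i), fun h => h ▸ rfl⟩

lemma sum_glue [Fintype (Asg Val)] [Fintype (Asg B)] {_ : Fintype (Asg (SumVal Val B))}
    (g : Asg (SumVal Val B) → ℝ) : ∑ w, g w = ∑ a, ∑ b, g (glue a b) := by
  let e : Asg Val × Asg B ≃ Asg (SumVal Val B) := {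
    toFun := fun z => glue z.1 z.2
    invFun := fun w => (fun i => w (.inl i), fun k => w (.inr k))
    left_inv := fun _ => rfl
    right_inv := fun w => funext fun i => by cases i <;> rfl }
  rw [← e.sum_comp, Fintype.sum_prod_type]
  rfl

end Glue

section Extension

variable {ν : Type} {Val : ν → Type} [Fintype ν] [∀ i, Fintype (Val i)] [∀ i, Nonempty (Val i)]

/-- `N` arises from `M` by adding independent exogenous variables whose values encode, through
`Φ`, a response profile with law `respP`, and by letting every endogenous variable respond
accordingly. -/
structure IsRespExt (M : CM ν Val) {β : Type} {B : β → Type} [Fintype β]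
    (N : CM (ν ⊕ β) (SumVal Val B)) (Φ : Asg B ≃ M.Resp) : Prop where
  exo_eq : N.exo = M.exo.disjSum univ
  cpt_exo : ∀ i ∈ M.exo, ∀ (w : Asg (SumVal Val B)) (x : Val i),
    N.cpt (.inl i) w x = M.cpt i (fun j => w (.inl j)) x
  cpt_endo : ∀ (p : RVI M) (w : Asg (SumVal Val B)) (x : Val p.1), N.cpt (.inl p.1) w x =
    if x = Φ (fun b => w (.inr b)) p (M.restrictPa (fun j => w (.inl j)) p.1) then 1 else 0
  prod_cpt : ∀ w : Asg (SumVal Val B),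
    ∏ b, N.cpt (.inr b) w (w (.inr b)) = M.respP (Φ fun b => w (.inr b))

namespace IsRespExt

variable {M : CM ν Val} {β : Type} {B : β → Type} [Fintype β]
  {N : CM (ν ⊕ β) (SumVal Val B)} {Φ : Asg B ≃ M.Resp}

lemma glue_agree_iff (hN : M.IsRespExt N Φ) (a a' : Asg Val) (b : Asg B) :
    (∀ i ∈ N.exo, glue a' b i = glue a b i) ↔ ∀ i ∈ M.exo, a' i = a i := by
  rw [hN.exo_eq]
  refine ⟨fun h i hi => h (.inl i) (inl_mem_disjSum.2 hi), fun h => ?_⟩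
  rintro (i | k) hi
  exacts [h i (inl_mem_disjSum.1 hi), rfl]

lemma exists_eq_glue (hN : M.IsRespExt N Φ) {a : Asg Val} {b : Asg B} {w : Asg (SumVal Val B)}
    (hw : ∀ i ∈ N.exo, w i = glue a b i) : ∃ a', w = glue a' b := by
  refine ⟨fun i => w (.inl i), funext ?_⟩
  rintro (i | k)
  exacts [rfl, hw (.inr k) (by simp [hN.exo_eq])]

lemma pdo_glue (hN : M.IsRespExt N Φ) [∀ b, Nonempty (B b)] {X : Finset ν}
    (hX : ∀ i ∈ X, i ∉ M.exo) (xv w : Asg Val) (b : Asg B) :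
    N.pdo (X.image Sum.inl) (liftAsg xv) (glue w b) =
      if (∀ i ∈ X, w i = xv i) ∧ ∀ p : RVI M, p.1 ∉ X → w p.1 = Φ b p (M.restrictPa w p.1)
      then M.exoP w * M.respP (Φ b) else 0 := by
  have hpdo : N.pdo (X.image Sum.inl) (liftAsg xv) (glue w b) = if ∀ i ∈ X, w i = xv i
      then ∏ i ∈ Xᶜ.disjSum univ, N.cpt i (glue w b) (glue w b i) else 0 := by
    rw [pdo]
    congr! 1
    · exact forall_mem_image
    · exact prod_congr (by ext (i | k) <;> simp) fun _ _ => rfl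
  have hexo : ∏ i ∈ M.exo, N.cpt (.inl i) (glue w b) (glue w b (.inl i)) = M.exoP w :=
    prod_congr rfl fun i hi => hN.cpt_exo i hi _ _
  have hendo : ∏ p : RVI M with p.1 ∉ X, N.cpt (.inl p.1) (glue w b) (glue w b (.inl p.1)) =
      if ∀ p : RVI M, p.1 ∉ X → w p.1 = Φ b p (M.restrictPa w p.1) then 1 else 0 := by
    refine (prod_congr rfl fun p _ => hN.cpt_endo p _ _).trans ?_
    rw [prod_boole]
    simp only [mem_filter, mem_univ, true_and]
    rfl
  have hresp : ∏ k, N.cpt (.inr k) (glue w b) (glue w b (.inr k)) = M.respP (Φ b) :=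
    hN.prod_cpt _
  rw [hpdo, prod_disjSum, M.prod_compl_eq_prod_exo_mul hX, hexo, hendo, hresp]
  simp only [ite_and, mul_boole, ite_mul, zero_mul]

lemma joint_glue (hN : M.IsRespExt N Φ) [∀ b, Nonempty (B b)] (a : Asg Val) (b : Asg B) :
    N.joint (glue a b) = M.worldP a (Φ b) := by
  have h := hN.pdo_glue (X := ∅) (by simp) a a b
  simp only [image_empty, pdo_empty, notMem_empty, implies_true, true_and, not_false_eq_true,
    true_imp_iff] at h
  rw [h, worldP]
  congr!

variable [∀ b, Fintype (B b)] [∀ b, Nonempty (B b)]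

lemma cfBasic_glue (hN : M.IsRespExt N Φ) (hM : M.WF) (e : CFEvent ν Val)
    (hX : ∀ i ∈ e.X, i ∉ M.exo) {a : Asg Val} {b : Asg B}
    (hpos : M.exoP a * M.respP (Φ b) ≠ 0) :
    N.cfBasic (e.X.image Sum.inl) (liftAsg e.xv) (e.Y.image Sum.inl) (liftAsg e.yv) (glue a b) =
      if M.Holds e a (Φ b) then 1 else 0 := by
  have hsol := (eq_solution_iff hM.acyclic hX (Φ b) e.xv a _).1 rfl
  rw [cfBasic_of_pdo_eq_ite (w₀ := glue (M.solution (Φ b) e.X e.xv a) b) hpos]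
  · congr!
    exact forall_mem_image
  · exact (hN.glue_agree_iff _ _ b).2 hsol.1
  · intro w hw
    obtain ⟨w, rfl⟩ := hN.exists_eq_glue hw
    have hexo := (hN.glue_agree_iff _ _ b).1 hw
    rw [hN.pdo_glue hX, hM.exoP_congr hexo]
    congr! 1
    rw [glue_left_inj, eq_solution_iff hM.acyclic hX]
    exact (and_iff_right hexo).symm

lemma sum_prod_cfBasic_glue (hN : M.IsRespExt N Φ) (hM : M.WF) {evs : List (CFEvent ν Val)}
    (hX : ∀ e ∈ evs, ∀ i ∈ e.X, i ∉ M.exo) (a : Asg Val) :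
    ∑ b, ((evs.map liftCFEvent).map fun e => N.cfBasic e.X e.xv e.Y e.yv (glue a b)).prod *
      N.joint (glue a b) = M.cfJoint evs a := by
  rw [cfJoint, ← Φ.sum_comp]
  refine sum_congr rfl fun b _ => ?_
  rw [hN.joint_glue]
  rcases eq_or_ne (M.worldP a (Φ b)) 0 with hzero | hpos
  · rw [hzero, mul_zero, ite_self]
  have h : M.exoP a * M.respP (Φ b) ≠ 0 := fun h => hpos (by rw [worldP, h, ite_self])
  rw [← boole_mul, ← prod_map_boole, List.map_map]
  congr 2
  exact List.map_congr_left fun e he => hN.cfBasic_glue hM e (hX e he) h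

lemma sum_joint_glue (hN : M.IsRespExt N Φ) (hM : M.WF) (a : Asg Val) :
    ∑ b, N.joint (glue a b) = M.joint a := by
  simpa [hM.cfJoint_nil] using hN.sum_prod_cfBasic_glue hM (evs := []) (by simp) a

theorem extProb_eq_respProb (hN : M.IsRespExt N Φ) (hM : M.WF) {evs : List (CFEvent ν Val)}
    (hX : ∀ e ∈ evs, ∀ i ∈ e.X, i ∉ M.exo) : extProb N evs = M.respProb evs := by
  rw [extProb, cfProb, sum_glue]
  exact sum_congr rfl fun a _ => hN.sum_prod_cfBasic_glue hM hX a

theorem extProbCond_eq_respProbCond (hN : M.IsRespExt N Φ) (hM : M.WF) {evs : List (CFEvent ν Val)}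
    (hX : ∀ e ∈ evs, ∀ i ∈ e.X, i ∉ M.exo) (Z : Finset ν) (zv : Asg Val) :
    extProbCond N evs Z zv = M.respProbCond evs Z zv := by
  have hZ (a : Asg Val) (b : Asg B) :
      (∀ i ∈ Z.image Sum.inl, glue a b i = liftAsg zv i) ↔ ∀ i ∈ Z, a i = zv i := forall_mem_image
  rw [extProbCond, cfProbCond, respProbCond, sum_glue, sum_glue]
  congr 1 <;> refine sum_congr rfl fun a _ => ?_
  · simp only [hZ]
    split_ifs
    · exact hN.sum_prod_cfBasic_glue hM hX a
    · simp only [zero_mul, sum_const_zero]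
  · simp only [hZ]
    split_ifs
    · exact hN.sum_joint_glue hM a
    · exact sum_const_zero

end IsRespExt

variable (M : CM ν Val)

lemma isRespExt_canonSCM_qGH : M.IsRespExt (M.canonSCM M.qGH) (Equiv.refl M.Resp) where
  exo_eq := by
    ext (i | p) <;> simp [canonSCM]
  cpt_exo i hi w x := dif_pos hi
  cpt_endo p w x := dif_neg p.2
  prod_cpt _ := rfl

/-- The currying bijection: a value of all the potential outcome variables `X_{pa_X}` is the
same thing as a response function for every endogenous `X`. -/
def poEquiv : Asg (POB M) ≃ M.Resp where
  toFun b p κ := b ⟨p, κ⟩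
  invFun f p := f p.1 p.2
  left_inv _ := rfl
  right_inv _ := rfl

lemma isRespExt_MN : M.IsRespExt M.MN M.poEquiv where
  exo_eq := by
    ext (i | p) <;> simp [MN]
  cpt_exo i hi w x := dif_pos hi
  cpt_endo p w x := dif_neg p.2
  prod_cpt w := Fintype.prod_sigma fun p : Σ i : {i : ν // i ∉ M.exo}, M.PaAsg i.1 =>
    M.cpt p.1.1 (M.extendPa p.1.1 p.2) (w (.inr p))

end Extension

section BasicEvents

variable {ν : Type} {Val : ν → Type} [Fintype ν] [∀ i, Fintype (Val i)]

lemma pbBasic_eq_pbProbCond_univ {M : CM ν Val} {a : Asg Val} (ha : M.joint a ≠ 0)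
    (e : CFEvent ν Val) :
    M.pbBasic a e.X e.xv e.Y e.yv = M.pbProbCond [e] univ a := by
  have huniv (w : Asg Val) : (∀ i ∈ univ, w i = a i) ↔ w = a := by simp [funext_iff]
  simp only [pbProbCond, huniv, ite_mul, zero_mul,
    Fintype.sum_ite_eq', List.map_singleton, List.prod_singleton, mul_div_cancel_right₀ _ ha]

lemma extBasicCond_eq_extProbCond_univ {β : Type} {B : β → Type} [Fintype β]
    [∀ b, Fintype (B b)] [∀ b, Nonempty (B b)] (N : CM (ν ⊕ β) (SumVal Val B)) (a : Asg Val)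
    (e : CFEvent ν Val) :
    extBasicCond N a e.X e.xv e.Y e.yv = extProbCond N [e] univ a := by
  have huniv (w : Asg (SumVal Val B)) :
      (∀ i ∈ univ.image Sum.inl, w i = liftAsg a i) ↔ ∀ i : ν, w (.inl i) = a i := by
    rw [forall_mem_image]
    exact ⟨fun h i => h (mem_univ i), fun h i _ => h i⟩
  simp only [extBasicCond, extProbCond, cfProbCond, huniv, ite_mul, zero_mul, List.map_singleton,
    List.prod_singleton, liftCFEvent]
  congr!

end BasicEvents

end CM

theorem all_semantics_agree_general {ν : Type} {Val : ν → Type} [Fintype ν]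
    [∀ i, Fintype (Val i)] [∀ i, Nonempty (Val i)] (M : CM ν Val) (hM : M.WF) :
    M.IsCanonicalDist M.qGH ∧
      (∀ evs : List (CFEvent ν Val), (∀ e ∈ evs, ∀ i ∈ e.X, i ∉ M.exo) →
        extProb (M.canonSCM M.qGH) evs = M.pnProb evs ∧
        ∀ Z zv, extProbCond (M.canonSCM M.qGH) evs Z zv = M.pnProbCond evs Z zv) ∧
      (∀ evs : List (CFEvent ν Val), (∀ e ∈ evs, ∀ i ∈ e.X, i ∉ M.exo) →
        (∀ a, M.joint a ≠ 0 → evs.Pairwise fun e e' => e.Actual a ∨ e'.Actual a) →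
        M.pbProb evs = extProb (M.canonSCM M.qGH) evs ∧
        ∀ Z zv, M.pbProbCond evs Z zv = extProbCond (M.canonSCM M.qGH) evs Z zv) ∧
      ∀ a, M.joint a ≠ 0 → ∀ e : CFEvent ν Val, (∀ i ∈ e.X, i ∉ M.exo) →
        M.pbBasic a e.X e.xv e.Y e.yv =
          extBasicCond (M.canonSCM M.qGH) a e.X e.xv e.Y e.yv ∧
        extBasicCond (M.canonSCM M.qGH) a e.X e.xv e.Y e.yv =
          M.pnBasicCond a e.X e.xv e.Y e.yv := by
  have hGH := M.isRespExt_canonSCM_qGH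
  have hN := M.isRespExt_MN
  refine ⟨hM.isCanonicalDist_qGH, fun evs hX => ⟨?_, fun Z zv => ?_⟩,
    fun evs hX hactual => ⟨?_, fun Z zv => ?_⟩, fun a ha e hX => ?_⟩
  · exact (hGH.extProb_eq_respProb hM hX).trans (hN.extProb_eq_respProb hM hX).symm
  · exact (hGH.extProbCond_eq_respProbCond hM hX Z zv).trans
      (hN.extProbCond_eq_respProbCond hM hX Z zv).symm
  · exact (hM.pbProb_eq_respProb hX hactual).trans (hGH.extProb_eq_respProb hM hX).symm
  · exact (hM.pbProbCond_eq_respProbCond hX hactual Z zv).trans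
      (hGH.extProbCond_eq_respProbCond hM hX Z zv).symm
  · have hX' : ∀ e' ∈ [e], ∀ i ∈ e'.X, i ∉ M.exo := List.forall_mem_singleton.2 hX
    rw [CM.pnBasicCond, CM.pbBasic_eq_pbProbCond_univ ha, CM.extBasicCond_eq_extProbCond_univ,
      CM.extBasicCond_eq_extProbCond_univ, hM.pbProbCond_eq_respProbCond hX' fun _ _ =>
      List.pairwise_singleton _ _, hGH.extProbCond_eq_respProbCond hM hX',
      hN.extProbCond_eq_respProbCond hM hX']
    exact ⟨rfl, rfl⟩

/-- **Corollary.** Given a causal model `M` (with `M^IC` the independent canonical SCM,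
i.e. the canonical SCM — given by the response-variable distribution `qic` — whose
counterfactual probabilities equal those of the PO-SCM `M^N`):
(i) `P^GH(y_x, …, z_w) = P^N(y_x, …, z_w) = P^IC(y_x, …, z_w)`;
(ii) for all `(u, v)` with `P_M(u, v) > 0`,
  `P^B(y_x | u, v) = P^GH(y_x | u, v) = P^N(y_x | u, v) = P^IC(y_x | u, v)`;
(iii) for all `z'` with `P_M(z') > 0`,
  `P^B(y_x | z') = P^GH(y_x | z') = P^N(y_x | z') = P^IC(y_x | z')`;
(iv) for any binary `X, Y ∈ V`:
  `PN^B = PN^GH = PN^N = PN^IC`, `PS^B = PS^GH = PS^N = PS^IC`, and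
  `PNS^B = PNS^GH = PNS^N = PNS^IC`. -/
theorem all_semantics_agree
    {ν : Type} {Val : ν → Type} [Fintype ν] [∀ i, Fintype (Val i)] [∀ i, Nonempty (Val i)]
    (M : CM ν Val) (hM : M.WF) :
    ∃ qic : (p : CM.RVI M) → CM.RType M p.1 → ℝ,
      M.IsCanonicalDist qic ∧
      -- `M^IC` is the independent canonical SCM: its counterfactual probabilities
      -- equal those of the PO-SCM `M^N`
      (∀ evs : List (CFEvent ν Val),
        (∀ e ∈ evs, (∀ i ∈ e.X, i ∉ M.exo) ∧ (∀ i ∈ e.Y, i ∉ M.exo)) →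
        extProb (M.canonSCM qic) evs = M.pnProb evs) ∧
      -- (i)
      (∀ evs : List (CFEvent ν Val),
        (∀ e ∈ evs, (∀ i ∈ e.X, i ∉ M.exo) ∧ (∀ i ∈ e.Y, i ∉ M.exo)) →
        extProb (M.canonSCM M.qGH) evs = M.pnProb evs ∧
        M.pnProb evs = extProb (M.canonSCM qic) evs) ∧
      -- (ii)
      (∀ (a : Asg Val), 0 < M.joint a →
        ∀ (X : Finset ν), (∀ i ∈ X, i ∉ M.exo) → ∀ (xv : Asg Val),
        ∀ (Y : Finset ν), (∀ i ∈ Y, i ∉ M.exo) → ∀ (yv : Asg Val),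
        M.pbBasic a X xv Y yv = extBasicCond (M.canonSCM M.qGH) a X xv Y yv ∧
        extBasicCond (M.canonSCM M.qGH) a X xv Y yv = M.pnBasicCond a X xv Y yv ∧
        M.pnBasicCond a X xv Y yv = extBasicCond (M.canonSCM qic) a X xv Y yv) ∧
      -- (iii)
      (∀ (X : Finset ν), (∀ i ∈ X, i ∉ M.exo) → ∀ (xv : Asg Val),
        ∀ (Y : Finset ν), (∀ i ∈ Y, i ∉ M.exo) → ∀ (yv : Asg Val),
        ∀ (Z : Finset ν), (∀ i ∈ Z, i ∉ M.exo) → ∀ (zv : Asg Val),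
        (0 < ∑ w : Asg Val, if ∀ i ∈ Z, w i = zv i then M.joint w else 0) →
        M.pbProbCond [⟨X, xv, Y, yv⟩] Z zv
            = extProbCond (M.canonSCM M.qGH) [⟨X, xv, Y, yv⟩] Z zv ∧
        extProbCond (M.canonSCM M.qGH) [⟨X, xv, Y, yv⟩] Z zv
            = M.pnProbCond [⟨X, xv, Y, yv⟩] Z zv ∧
        M.pnProbCond [⟨X, xv, Y, yv⟩] Z zv
            = extProbCond (M.canonSCM qic) [⟨X, xv, Y, yv⟩] Z zv) ∧
      -- (iv)
      (∀ (X Y : ν), X ∉ M.exo → Y ∉ M.exo → X ≠ Y →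
        ∀ (x0 x1 : Val X), x0 ≠ x1 → (∀ v : Val X, v = x0 ∨ v = x1) →
        ∀ (y0 y1 : Val Y), y0 ≠ y1 → (∀ v : Val Y, v = y0 ∨ v = y1) →
        -- PN
        (M.pbProbCond [⟨{X}, Function.update (dfltAsg Val) X x0, {Y}, Function.update (dfltAsg Val) Y y0⟩]
              {X, Y} (Function.update (Function.update (dfltAsg Val) X x1) Y y1)
            = extProbCond (M.canonSCM M.qGH)
              [⟨{X}, Function.update (dfltAsg Val) X x0, {Y}, Function.update (dfltAsg Val) Y y0⟩]
              {X, Y} (Function.update (Function.update (dfltAsg Val) X x1) Y y1) ∧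
          extProbCond (M.canonSCM M.qGH)
              [⟨{X}, Function.update (dfltAsg Val) X x0, {Y}, Function.update (dfltAsg Val) Y y0⟩]
              {X, Y} (Function.update (Function.update (dfltAsg Val) X x1) Y y1)
            = M.pnProbCond
              [⟨{X}, Function.update (dfltAsg Val) X x0, {Y}, Function.update (dfltAsg Val) Y y0⟩]
              {X, Y} (Function.update (Function.update (dfltAsg Val) X x1) Y y1) ∧
          M.pnProbCond
              [⟨{X}, Function.update (dfltAsg Val) X x0, {Y}, Function.update (dfltAsg Val) Y y0⟩]
              {X, Y} (Function.update (Function.update (dfltAsg Val) X x1) Y y1)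
            = extProbCond (M.canonSCM qic)
              [⟨{X}, Function.update (dfltAsg Val) X x0, {Y}, Function.update (dfltAsg Val) Y y0⟩]
              {X, Y} (Function.update (Function.update (dfltAsg Val) X x1) Y y1)) ∧
        -- PS
        (M.pbProbCond [⟨{X}, Function.update (dfltAsg Val) X x1, {Y}, Function.update (dfltAsg Val) Y y1⟩]
              {X, Y} (Function.update (Function.update (dfltAsg Val) X x0) Y y0)
            = extProbCond (M.canonSCM M.qGH)
              [⟨{X}, Function.update (dfltAsg Val) X x1, {Y}, Function.update (dfltAsg Val) Y y1⟩]
              {X, Y} (Function.update (Function.update (dfltAsg Val) X x0) Y y0) ∧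
          extProbCond (M.canonSCM M.qGH)
              [⟨{X}, Function.update (dfltAsg Val) X x1, {Y}, Function.update (dfltAsg Val) Y y1⟩]
              {X, Y} (Function.update (Function.update (dfltAsg Val) X x0) Y y0)
            = M.pnProbCond
              [⟨{X}, Function.update (dfltAsg Val) X x1, {Y}, Function.update (dfltAsg Val) Y y1⟩]
              {X, Y} (Function.update (Function.update (dfltAsg Val) X x0) Y y0) ∧
          M.pnProbCond
              [⟨{X}, Function.update (dfltAsg Val) X x1, {Y}, Function.update (dfltAsg Val) Y y1⟩]
              {X, Y} (Function.update (Function.update (dfltAsg Val) X x0) Y y0)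
            = extProbCond (M.canonSCM qic)
              [⟨{X}, Function.update (dfltAsg Val) X x1, {Y}, Function.update (dfltAsg Val) Y y1⟩]
              {X, Y} (Function.update (Function.update (dfltAsg Val) X x0) Y y0)) ∧
        -- PNS
        (M.pbProb [⟨{X}, Function.update (dfltAsg Val) X x1, {Y}, Function.update (dfltAsg Val) Y y1⟩,
                   ⟨{X}, Function.update (dfltAsg Val) X x0, {Y}, Function.update (dfltAsg Val) Y y0⟩]
            = extProb (M.canonSCM M.qGH)
              [⟨{X}, Function.update (dfltAsg Val) X x1, {Y}, Function.update (dfltAsg Val) Y y1⟩,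
               ⟨{X}, Function.update (dfltAsg Val) X x0, {Y}, Function.update (dfltAsg Val) Y y0⟩] ∧
          extProb (M.canonSCM M.qGH)
              [⟨{X}, Function.update (dfltAsg Val) X x1, {Y}, Function.update (dfltAsg Val) Y y1⟩,
               ⟨{X}, Function.update (dfltAsg Val) X x0, {Y}, Function.update (dfltAsg Val) Y y0⟩]
            = M.pnProb
              [⟨{X}, Function.update (dfltAsg Val) X x1, {Y}, Function.update (dfltAsg Val) Y y1⟩,
               ⟨{X}, Function.update (dfltAsg Val) X x0, {Y}, Function.update (dfltAsg Val) Y y0⟩] ∧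
          M.pnProb
              [⟨{X}, Function.update (dfltAsg Val) X x1, {Y}, Function.update (dfltAsg Val) Y y1⟩,
               ⟨{X}, Function.update (dfltAsg Val) X x0, {Y}, Function.update (dfltAsg Val) Y y0⟩]
            = extProb (M.canonSCM qic)
              [⟨{X}, Function.update (dfltAsg Val) X x1, {Y}, Function.update (dfltAsg Val) Y y1⟩,
               ⟨{X}, Function.update (dfltAsg Val) X x0, {Y}, Function.update (dfltAsg Val) Y y0⟩])) := by
  obtain ⟨hcanon, hGH, hB, hbasic⟩ := all_semantics_agree_general M hM
  have hendo {X : ν} (hX : X ∉ M.exo) : ∀ i ∈ ({X} : Finset ν), i ∉ M.exo := by simpa using hX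
  have hprob (evs : List (CFEvent ν Val))
      (h : ∀ e ∈ evs, (∀ i ∈ e.X, i ∉ M.exo) ∧ ∀ i ∈ e.Y, i ∉ M.exo) :
      extProb (M.canonSCM M.qGH) evs = M.pnProb evs := (hGH evs fun e he => (h e he).1).1
  have hcond (e : CFEvent ν Val) (hX : ∀ i ∈ e.X, i ∉ M.exo) (Z : Finset ν) (zv : Asg Val) :
      M.pbProbCond [e] Z zv = extProbCond (M.canonSCM M.qGH) [e] Z zv ∧
      extProbCond (M.canonSCM M.qGH) [e] Z zv = M.pnProbCond [e] Z zv ∧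
      M.pnProbCond [e] Z zv = extProbCond (M.canonSCM M.qGH) [e] Z zv := by
    have hX' : ∀ e' ∈ [e], ∀ i ∈ e'.X, i ∉ M.exo := List.forall_mem_singleton.2 hX
    have h := (hGH [e] hX').2 Z zv
    exact ⟨(hB [e] hX' fun _ _ => List.pairwise_singleton _ _).2 Z zv, h, h.symm⟩
  refine ⟨M.qGH, hcanon, hprob, fun evs h => ⟨hprob evs h, (hprob evs h).symm⟩,
    fun a ha X hX xv Y _ yv => have h := hbasic a ha.ne' ⟨X, xv, Y, yv⟩ hX; ⟨h.1, h.2, h.2.symm⟩,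
    fun X hX xv Y _ yv Z _ zv _ => hcond ⟨X, xv, Y, yv⟩ hX Z zv,
    fun X Y hX hY _ x0 x1 _ hbinary y0 y1 _ _ =>
      ⟨hcond _ (hendo hX) _ _, hcond _ (hendo hX) _ _, ?_⟩⟩
  refine ⟨(hB _ ?_ fun a _ => CFEvent.pairwise_actual_of_binary hbinary a).1, hprob _ ?_,
    (hprob _ ?_).symm⟩ <;> simp [hX, hY]

end
end
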